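/- arXiv:2303.07921 — 2 statements merged into one kernel-verified Lean document; each statement's English description precedes it below -/
import Mathlib

section
/- Let C : (−ε,ε) × 𝕋 → ℝ² be a smooth family of simple closed plane curves (𝕋 = ℝ/2πℤ), with variation field X = ∂_t C, speed v = |∂_u C| > 0, curvature ρ = det(∂_u C, ∂²_u C)/v³, and outward unit normal ν obtained by rotating the unit tangent ∂_u C/v by −π/2. Then for every t one has d/dt (σ(t)/λ(t)²) = (σ(t)/λ(t)²) · (1/σ(t)) ∫₀^{2π} ⟨X(t,u), (ρ(t,u) − 2σ(t)/λ(t)) ν(t,u)⟩ v(t,u) du, where σ(t) = ∫₀^{2π} v(t,u) du is the perimeter and λ(t) = ½ ∫₀^{2π} det(C(t,u), ∂_u C(t,u)) du is the enclosed area. Consequently the renormalized curvature flow ∂_t C = (−ρ + 2σ/λ)ν is the gradient descent flow of the functional D ↦ ln(σ(∂D)/λ(D)²) with respect to the L²(ds/σ) metric on normal vector fields. -/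
/-!
The formula is the quotient rule applied to the first variations `σ' = ∫ ρ ⟨X, ν⟩ v du` and
`λ' = ∫ ⟨X, ν⟩ v du`. Both come from differentiating under the integral sign
(`hasDerivAt_integral_strip`) and discarding total derivatives of periodic functions: with `T` the
unit tangent, `∂_t v = ρ ⟨X, ν⟩ v + ∂_u ⟨T, X⟩` (`speed_identity`) and
`∂_t det(C, ∂_u C) = 2 ⟨X, ν⟩ v + ∂_u det(C, X)`.

The quotient rule needs `λ ≠ 0`, a weak form of the Jordan curve theorem (`ar0_ne_zero`,
`IsSimpleLoop.area_ne_zero`). Write the curve as a loop `z` in `ℂ`.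
* By Fubini and Newton's identity `∫_{|p| < R} (z - p)⁻¹ dp = π z̄` for `|z| < R` (`newton`), the
  integral of the winding number over the plane is the signed area
  (`IsSimpleLoop.integral_wind`).
* The winding number is an integer, locally constant off the curve. A point off the curve is joined,
  inside the complement, to a point near the curve by the normal segment at a nearest point of the
  curve (`IsSimpleLoop.exists_nearest`). Short normals on the same side of the curve lie in a
  connected subset of the complement (`IsSimpleLoop.exists_tube`). So the winding number takes at
  most two values off the curve, one for each side.
* The two values differ: near `z π`, the difference of the Cauchy kernels for the two points at
  height `± ε` on the normal there is, divided by `2i`, bounded below by a multiple of the Poisson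
  kernel of the tangent line, and elsewhere it is `O(ε)` (`IsSimpleLoop.exists_jump`).
* One of them is zero because the winding number vanishes far away. Hence the winding number is
  almost everywhere `0` or a fixed nonzero integer, which it attains on a nonempty open set, and its
  integral cannot vanish.
-/


open Real Set Filter MeasureTheory Topology

noncomputable section

/-- Euclidean dot product on `ℝ²`. -/
def dot2 (a b : ℝ × ℝ) : ℝ := a.1 * b.1 + a.2 * b.2

/-- `∂_u C`. -/
def Cu (C : ℝ → ℝ → ℝ × ℝ) (t u : ℝ) : ℝ × ℝ := deriv (C t) u

/-- `∂²_u C`. -/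
def Cuu (C : ℝ → ℝ → ℝ × ℝ) (t u : ℝ) : ℝ × ℝ := deriv (deriv (C t)) u

/-- The speed `v = |∂_u C|` (Euclidean norm). -/
def spd (C : ℝ → ℝ → ℝ × ℝ) (t u : ℝ) : ℝ :=
  Real.sqrt ((Cu C t u).1 ^ 2 + (Cu C t u).2 ^ 2)

/-- The variation field `X = ∂_t C`. -/
def Xf (C : ℝ → ℝ → ℝ × ℝ) (t u : ℝ) : ℝ × ℝ := deriv (fun s => C s u) t

/-- The curvature `ρ = det(∂_u C, ∂²_u C)/v³`. -/
def curv (C : ℝ → ℝ → ℝ × ℝ) (t u : ℝ) : ℝ :=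
  ((Cu C t u).1 * (Cuu C t u).2 - (Cu C t u).2 * (Cuu C t u).1) / (spd C t u) ^ 3

/-- The outward unit normal `ν`: the unit tangent `∂_u C/v` rotated by `−π/2`,
i.e. `(x,y) ↦ (y,−x)` applied to the unit tangent. -/
def nrm (C : ℝ → ℝ → ℝ × ℝ) (t u : ℝ) : ℝ × ℝ :=
  (spd C t u)⁻¹ • ((Cu C t u).2, -(Cu C t u).1)

/-- The perimeter `σ(t) = ∫₀^{2π} v(t,u) du`. -/
def per0 (C : ℝ → ℝ → ℝ × ℝ) (t : ℝ) : ℝ := ∫ u in (0:ℝ)..(2 * π), spd C t u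

/-- The enclosed area `λ(t) = ½ ∫₀^{2π} det(C, ∂_u C) du`. -/
def ar0 (C : ℝ → ℝ → ℝ × ℝ) (t : ℝ) : ℝ :=
  (1 / 2) * ∫ u in (0:ℝ)..(2 * π),
    ((C t u).1 * (Cu C t u).2 - (C t u).2 * (Cu C t u).1)

/-! ### Newton's theorem in the plane -/

open Metric in
/-- The mean of `p ↦ (z - p)⁻¹` over a circle centred at `0` not enclosing `z` is its value at `0`. -/
lemma circle_lt {z : ℂ} {r : ℝ} (hr : 0 < r) (h : r < ‖z‖) :
    ∫ θ in (0:ℝ)..(2*π), (z - circleMap 0 r θ)⁻¹ = 2 * π * z⁻¹ := by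
  have hd : DifferentiableOn ℂ (fun p : ℂ => (z - p)⁻¹) (closedBall 0 |r|) := by
    intro p hp
    have : z - p ≠ 0 := by
      intro h0
      rw [sub_eq_zero] at h0
      subst h0
      simp [abs_of_pos hr] at hp; linarith
    exact ((differentiableAt_const _).sub differentiableAt_id).inv this |>.differentiableWithinAt
  have hd' : DiffContOnCl ℂ (fun p : ℂ => (z - p)⁻¹) (ball 0 |r|) := hd.diffContOnCl_ball subset_rfl
  have := hd'.circleAverage
  rw [Real.circleAverage_def] at this
  simp only [sub_zero, Complex.real_smul] at this
  have hpi : (π : ℂ) ≠ 0 := by exact_mod_cast Real.pi_ne_zero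
  rw [← this]
  push_cast
  field_simp

open Metric in
/-- The mean of `p ↦ (z - p)⁻¹` over a circle centred at `0` and enclosing `z` vanishes; this is the
Cauchy formula for the constant function `1`. -/
lemma circle_gt {z : ℂ} {r : ℝ} (hz : z ≠ 0) (h : ‖z‖ < r) :
    ∫ θ in (0:ℝ)..(2*π), (z - circleMap 0 r θ)⁻¹ = 0 := by
  have hr : 0 < r := (norm_nonneg z).trans_lt h
  have h1 := (diffContOnCl_const (c := (1:ℂ)) : DiffContOnCl ℂ (fun _ : ℂ => (1:ℂ)) (ball 0 |r|)).circleAverage_smul_div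
    (w := z) (by simpa [abs_of_pos hr] using h)
  rw [Real.circleAverage_def] at h1
  have hne : ∀ θ, circleMap 0 r θ - z ≠ 0 := fun θ h0 => by
    rw [sub_eq_zero] at h0
    have : ‖circleMap 0 r θ‖ = r := by simp [abs_of_pos hr]
    rw [h0] at this; linarith
  have hpi : (π : ℂ) ≠ 0 := by exact_mod_cast Real.pi_ne_zero
  have hcont : Continuous fun θ => (circleMap 0 r θ - z)⁻¹ :=
    ((continuous_circleMap 0 r).sub continuous_const).inv₀ hne
  have e : ∀ θ, ((circleMap 0 r θ - 0) / (circleMap 0 r θ - z)) • (1:ℂ) = 1 + z * (circleMap 0 r θ - z)⁻¹ := by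
    intro θ
    have := hne θ
    simp; field_simp; ring
  simp_rw [e] at h1
  rw [intervalIntegral.integral_add (by simp) (Continuous.intervalIntegrable (by fun_prop) _ _),
    intervalIntegral.integral_const_mul] at h1
  have h2 : ∫ θ in (0:ℝ)..(2*π), (circleMap 0 r θ - z)⁻¹ = 0 := by
    simp at h1
    field_simp at h1
    simpa [hz] using h1
  have e2 : ∀ θ, (z - circleMap 0 r θ)⁻¹ = - (circleMap 0 r θ - z)⁻¹ := by
    intro θ; rw [← neg_sub, inv_neg]
  simp_rw [e2]
  rw [intervalIntegral.integral_neg, h2, neg_zero]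

lemma integrableOn_inv (z : ℂ) (R : ℝ) : IntegrableOn (fun p : ℂ => (z - p)⁻¹) (Metric.ball 0 R) := by
  have h := locallyIntegrable_of_norm_le_rpow (E := ℂ) (F := ℂ) (by simp) (f := fun p => p⁻¹) (C := 1) (α := 1) (μ := volume)
    (by simp) (Filter.Eventually.of_forall fun x => by simp [Real.rpow_neg_one])
    (by fun_prop)
  have h2 : IntegrableOn (fun p : ℂ => p⁻¹) (Metric.closedBall z R) := h.integrableOn_isCompact (isCompact_closedBall _ _)
  have := (Measure.measurePreserving_sub_left (volume : Measure ℂ) z)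
  have h3 := (this.integrableOn_comp_preimage (MeasurableEquiv.subLeft z).measurableEmbedding).2 h2
  refine h3.mono_set ?_
  intro p hp
  simp at hp ⊢
  exact hp.le

/-- The planar form of Newton's theorem: a uniform disc attracts an interior point like the concentric
disc through that point. Proved in polar coordinates, one circle at a time. -/
lemma newton {z : ℂ} {R : ℝ} (h : ‖z‖ < R) :
    ∫ p in Metric.ball (0:ℂ) R, (z - p)⁻¹ = π * (starRingEnd ℂ) z := by
  by_cases hz : z = 0
  · subst hz
    simp only [zero_sub, map_zero, mul_zero]
    rw [← integral_indicator measurableSet_ball]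
    have h1 := integral_neg_eq_self ((Metric.ball (0:ℂ) R).indicator fun p => (-p)⁻¹) volume
    have h2 : (fun p => (Metric.ball (0:ℂ) R).indicator (fun p => (-p)⁻¹) (-p)) =
        fun p => - (Metric.ball (0:ℂ) R).indicator (fun p => (-p)⁻¹) p := by
      ext p
      by_cases hp : ‖p‖ < R <;> simp [indicator, hp, inv_neg]
    rw [h2, integral_neg] at h1
    exact self_eq_neg.1 h1.symm
  have hR : 0 < R := (norm_nonneg z).trans_lt h
  have hz0 : 0 < ‖z‖ := norm_pos_iff.2 hz
  set f : ℂ → ℂ := (Metric.ball (0:ℂ) R).indicator fun p => (z - p)⁻¹ with hf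
  have hInt : Integrable f :=
    (integrable_indicator_iff measurableSet_ball).2 (integrableOn_inv z R)
  have hfm : Measurable f := (by fun_prop : Measurable fun p : ℂ => (z - p)⁻¹).indicator
    measurableSet_ball
  have hpm : Measurable fun p : ℝ × ℝ => Complex.polarCoord.symm p := by
    simp_rw [Complex.polarCoord_symm_apply]
    fun_prop
  have hsymm : ∀ p : ℝ × ℝ, Complex.polarCoord.symm p = circleMap 0 p.1 p.2 := by
    intro p
    rw [Complex.polarCoord_symm_apply, circleMap_zero, Complex.exp_mul_I, Complex.ofReal_cos,
      Complex.ofReal_sin]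
  have hG : IntegrableOn (fun p : ℝ × ℝ => p.1 • f (Complex.polarCoord.symm p))
      polarCoord.target := by
    refine ⟨(measurable_fst.smul (hfm.comp hpm)).aestronglyMeasurable, ?_⟩
    have h1 := hInt.2
    rw [hasFiniteIntegral_iff_enorm, ← Complex.lintegral_comp_polarCoord_symm] at h1
    rw [hasFiniteIntegral_iff_enorm]
    refine lt_of_le_of_lt (le_of_eq ?_) h1
    refine setLIntegral_congr_fun polarCoord.open_target.measurableSet fun p hp => ?_
    rw [polarCoord_target] at hp
    simp only [smul_eq_mul, enorm_smul]
    rw [Real.enorm_of_nonneg (le_of_lt hp.1)]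
  rw [← integral_indicator measurableSet_ball, ← hf, ← Complex.integral_comp_polarCoord_symm]
  rw [polarCoord_target, Measure.volume_eq_prod] at hG ⊢
  rw [setIntegral_prod _ hG]
  -- the circle of radius `r` contributes `2πr/z` for `r < ‖z‖` and nothing for `‖z‖ < r`
  have hinner : ∀ r ∈ Ioi (0:ℝ), r ≠ ‖z‖ →
      ∫ θ in Ioo (-π) π, (r, θ).1 • f (Complex.polarCoord.symm (r, θ)) =
        (Ioo 0 ‖z‖).indicator (fun r : ℝ => (r : ℂ) * (2 * π * z⁻¹)) r := by
    intro r hr hrz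
    have hr : 0 < r := hr
    simp only [hsymm]
    rw [← integral_Ioc_eq_integral_Ioo, ← intervalIntegral.integral_of_le (by linarith [Real.pi_pos]),
      intervalIntegral.integral_smul]
    have hper : Function.Periodic (fun θ => f (circleMap 0 r θ)) (2 * π) := fun θ => by
      simp only [periodic_circleMap 0 r θ]
    have h2 := hper.intervalIntegral_add_eq (-π) 0
    rw [show -π + 2 * π = π by ring, zero_add] at h2
    rw [h2]
    rcases lt_or_gt_of_ne hrz with hlt | hgt
    · have : ∀ θ, f (circleMap 0 r θ) = (z - circleMap 0 r θ)⁻¹ := fun θ => by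
        rw [hf, indicator_of_mem]
        simp [abs_of_pos hr]; linarith
      simp_rw [this]
      rw [circle_lt hr hlt, indicator_of_mem (by exact ⟨hr, hlt⟩), Complex.real_smul]
    · rw [indicator_of_notMem (fun h => by have := h.2; linarith)]
      by_cases hrR : r < R
      · have : ∀ θ, f (circleMap 0 r θ) = (z - circleMap 0 r θ)⁻¹ := fun θ => by
          rw [hf, indicator_of_mem]
          simp [abs_of_pos hr]; linarith
        simp_rw [this]
        rw [circle_gt hz hgt, smul_zero]
      · have : ∀ θ, f (circleMap 0 r θ) = 0 := fun θ => by
          rw [hf, indicator_of_notMem]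
          simp [abs_of_pos hr]; linarith
        simp_rw [this]
        simp
  have hae : ∀ᵐ r : ℝ, r ∈ Ioi (0:ℝ) →
      ∫ θ in Ioo (-π) π, (r, θ).1 • f (Complex.polarCoord.symm (r, θ)) =
        (Ioo 0 ‖z‖).indicator (fun r : ℝ => (r : ℂ) * (2 * π * z⁻¹)) r := by
    filter_upwards [compl_mem_ae_iff.2 (measure_singleton (μ := volume) ‖z‖)] with r hr h0
    exact hinner r h0 hr
  rw [setIntegral_congr_ae measurableSet_Ioi hae, setIntegral_indicator measurableSet_Ioo,
    inter_eq_right.2 (fun r hr => hr.1), ← integral_Ioc_eq_integral_Ioo,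
    ← intervalIntegral.integral_of_le hz0.le, intervalIntegral.integral_mul_const,
    intervalIntegral.integral_ofReal, integral_id]
  have hzz : (starRingEnd ℂ) z = (‖z‖ : ℂ) ^ 2 * z⁻¹ := by
    rw [← Complex.conj_mul']
    field_simp
  rw [hzz]
  push_cast
  ring

/-! ### Simple loops and winding numbers -/

/-- A regular, simple closed `C¹` curve `z` in `ℂ` of period `2π`, with derivative `dz`. -/
structure IsSimpleLoop (z dz : ℝ → ℂ) : Prop where
  deriv : ∀ u, HasDerivAt z (dz u) u
  cont : Continuous dz
  per : ∀ u, z (u + 2 * π) = z u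
  inj : InjOn z (Ico 0 (2 * π))
  reg : ∀ u, dz u ≠ 0

/-- The Cauchy integral `∮ dz / (z - p)`, that is `2πi` times the winding number of the curve
about `p`. -/
def wind (z dz : ℝ → ℂ) (p : ℂ) : ℂ := ∫ u in (0:ℝ)..(2 * π), dz u * (z u - p)⁻¹

namespace IsSimpleLoop

variable {z dz : ℝ → ℂ}

lemma continuous (h : IsSimpleLoop z dz) : Continuous z :=
  continuous_iff_continuousAt.2 fun u => (h.deriv u).continuousAt

lemma dper (h : IsSimpleLoop z dz) (u : ℝ) : dz (u + 2 * π) = dz u := by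
  have h1 := (h.deriv (u + 2 * π)).comp_add_const u (2 * π)
  simp_rw [h.per] at h1
  exact h1.unique (h.deriv u)

lemma range_eq (h : IsSimpleLoop z dz) : range z = z '' Icc 0 (2 * π) := by
  have hp : Function.Periodic z (2 * π) := h.per
  have := hp.image_Icc Real.two_pi_pos 0
  rw [zero_add] at this
  exact this.symm

lemma isCompact_range (h : IsSimpleLoop z dz) : IsCompact (range z) := by
  rw [h.range_eq]
  exact isCompact_Icc.image h.continuous

lemma eq_of_eq (h : IsSimpleLoop z dz) {u s : ℝ} (he : z s = z u) (h1 : |s - u| < 2 * π) :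
    s = u := by
  have hp : Function.Periodic z (2 * π) := h.per
  have e : ∀ x, z (toIcoMod Real.two_pi_pos 0 x) = z x := fun x => by
    rw [toIcoMod]
    exact hp.sub_zsmul_eq _
  have hmem : ∀ x, toIcoMod Real.two_pi_pos 0 x ∈ Ico 0 (2 * π) := fun x => by
    simpa using toIcoMod_mem_Ico Real.two_pi_pos 0 x
  have h2 := h.inj (hmem s) (hmem u) (by rw [e, e, he])
  rw [toIcoMod, toIcoMod] at h2
  have h3 : s - u = ((toIcoDiv Real.two_pi_pos 0 s - toIcoDiv Real.two_pi_pos 0 u : ℤ) : ℝ) * (2 * π) := by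
    simp only [zsmul_eq_mul] at h2
    push_cast
    linarith
  rw [h3, abs_mul, abs_of_pos Real.two_pi_pos] at h1
  have h4 : |((toIcoDiv Real.two_pi_pos 0 s - toIcoDiv Real.two_pi_pos 0 u : ℤ) : ℝ)| < 1 := by
    have := Real.two_pi_pos
    by_contra hc
    nlinarith
  have h5 : toIcoDiv Real.two_pi_pos 0 s - toIcoDiv Real.two_pi_pos 0 u = 0 := by
    rw [← Int.cast_abs] at h4
    have : |toIcoDiv Real.two_pi_pos 0 s - toIcoDiv Real.two_pi_pos 0 u| < 1 := by exact_mod_cast h4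
    exact Int.abs_lt_one_iff.1 this
  rw [h5] at h3
  simp at h3
  linarith

lemma exists_bound (h : IsSimpleLoop z dz) : ∃ M > 0, ∀ u, ‖dz u‖ ≤ M := by
  have hp : Function.Periodic dz (2 * π) := h.dper
  obtain ⟨M, hM⟩ := isCompact_Icc.exists_bound_of_continuousOn (s := Icc 0 (2 * π)) h.cont.continuousOn
  refine ⟨max M 1, by positivity, fun u => ?_⟩
  obtain ⟨y, hy, he⟩ := hp.exists_mem_Ico₀ Real.two_pi_pos u
  rw [he]
  exact (hM y ⟨hy.1, hy.2.le⟩).trans (le_max_left _ _)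

lemma exists_lower (h : IsSimpleLoop z dz) : ∃ m > 0, ∀ u, m ≤ ‖dz u‖ := by
  have hp : Function.Periodic dz (2 * π) := h.dper
  obtain ⟨x, -, hx⟩ := isCompact_Icc.exists_isMinOn (s := Icc 0 (2 * π)) ⟨0, by simp [Real.pi_pos.le]⟩
    h.cont.norm.continuousOn
  refine ⟨‖dz x‖, norm_pos_iff.2 (h.reg x), fun u => ?_⟩
  obtain ⟨y, hy, he⟩ := hp.exists_mem_Ico₀ Real.two_pi_pos u
  rw [he]
  exact hx ⟨hy.1, hy.2.le⟩

lemma wind_integrable (h : IsSimpleLoop z dz) {p : ℂ} (hp : p ∉ range z) (a b : ℝ) :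
    IntervalIntegrable (fun u => dz u * (z u - p)⁻¹) volume a b := by
  refine (h.cont.mul ((h.continuous.sub continuous_const).inv₀ fun u h0 => ?_)).intervalIntegrable _ _
  exact hp ⟨u, sub_eq_zero.1 h0⟩

/-- The winding number is an integer, since `u ↦ exp (-∫₀ᵘ dz / (z - p)) (z - p)` is constant. -/
lemma wind_int (h : IsSimpleLoop z dz) {p : ℂ} (hp : p ∉ range z) :
    ∃ n : ℤ, wind z dz p = n * (2 * π * Complex.I) := by
  have hne : ∀ u, z u - p ≠ 0 := fun u h0 => hp ⟨u, sub_eq_zero.1 h0⟩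
  have hcont : Continuous fun u => dz u * (z u - p)⁻¹ :=
    h.cont.mul ((h.continuous.sub continuous_const).inv₀ hne)
  have hF : ∀ x, HasDerivAt (fun x => ∫ u in (0:ℝ)..x, dz u * (z u - p)⁻¹)
      (dz x * (z x - p)⁻¹) x := fun x =>
    intervalIntegral.integral_hasDerivAt_right (hcont.intervalIntegrable _ _)
      (hcont.stronglyMeasurableAtFilter _ _) hcont.continuousAt
  have hG : ∀ x, HasDerivAt (fun x => Complex.exp (-∫ u in (0:ℝ)..x, dz u * (z u - p)⁻¹) * (z x - p))
      0 x := fun x => by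
    have := (hF x).neg.cexp.mul ((h.deriv x).sub_const p)
    refine this.congr_deriv ?_
    have := hne x
    simp only [Pi.neg_apply]
    field_simp
    ring
  have hconst := is_const_of_deriv_eq_zero (fun x => (hG x).differentiableAt)
    (fun x => (hG x).deriv) (2 * π) 0
  have hz : z (2 * π) = z 0 := by simpa using h.per 0
  simp only [intervalIntegral.integral_same, neg_zero, Complex.exp_zero, one_mul, hz] at hconst
  have h1 : Complex.exp (-wind z dz p) = 1 :=
    mul_right_cancel₀ (hne 0) (by rw [one_mul]; exact hconst)
  rw [Complex.exp_neg, inv_eq_one, Complex.exp_eq_one_iff] at h1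
  exact h1

lemma wind_continuousOn (h : IsSimpleLoop z dz) : ContinuousOn (wind z dz) (range z)ᶜ := by
  rw [continuousOn_iff_continuous_domRestrict]
  refine intervalIntegral.continuous_parametric_intervalIntegral_of_continuous'
    (f := fun (p : ((range z)ᶜ : Set ℂ)) u => dz u * (z u - p)⁻¹) ?_ 0 (2 * π)
  refine Continuous.mul (h.cont.comp continuous_snd) (Continuous.inv₀ ?_ ?_)
  · exact (h.continuous.comp continuous_snd).sub (continuous_subtype_val.comp continuous_fst)
  · rintro ⟨⟨p, hp⟩, u⟩ h0
    exact hp ⟨u, sub_eq_zero.1 h0⟩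

/-- The winding number is locally constant off the curve, being continuous with values in the
discrete set of integers. -/
lemma wind_const (h : IsSimpleLoop z dz) {S : Set ℂ} (hS : IsPreconnected S) (hd : S ⊆ (range z)ᶜ)
    {p q : ℂ} (hp : p ∈ S) (hq : q ∈ S) : wind z dz p = wind z dz q := by
  have hc : ContinuousOn (fun p => (wind z dz p / (2 * π * Complex.I)).re) S :=
    Complex.continuous_re.comp_continuousOn ((h.wind_continuousOn.mono hd).div_const _)
  have hpi : (2 * π * Complex.I : ℂ) ≠ 0 := Complex.two_pi_I_ne_zero
  have hval : ∀ p ∈ S, ∃ n : ℤ, (wind z dz p / (2 * π * Complex.I)).re = n ∧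
      wind z dz p = n * (2 * π * Complex.I) := by
    intro p hp
    obtain ⟨n, hn⟩ := h.wind_int (hd hp)
    refine ⟨n, ?_, hn⟩
    rw [hn, mul_div_assoc, div_self hpi]
    simp
  have hconst : (wind z dz p / (2 * π * Complex.I)).re = (wind z dz q / (2 * π * Complex.I)).re := by
    refine hS.constant_of_mapsTo (T := range ((↑) : ℤ → ℝ)) ?_ hc ?_ hp hq
    · exact ⟨Int.isClosedEmbedding_coe_real.isEmbedding.toHomeomorph.symm.isEmbedding.discreteTopology⟩
    · intro p hp
      obtain ⟨n, hn, -⟩ := hval p hp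
      exact ⟨n, hn.symm⟩
  obtain ⟨n, hn, hn'⟩ := hval p hp
  obtain ⟨m, hm, hm'⟩ := hval q hq
  rw [hn, hm] at hconst
  have : n = m := by exact_mod_cast hconst
  rw [hn', hm', this]

/-- The winding number vanishes far away: it is an integer of absolute value less than one. -/
lemma exists_wind_zero (h : IsSimpleLoop z dz) :
    ∃ R, (∀ u, ‖z u‖ < R) ∧ ∀ p, R ≤ ‖p‖ → p ∉ range z ∧ wind z dz p = 0 := by
  obtain ⟨M, hM0, hM⟩ := h.exists_bound
  obtain ⟨B, hB⟩ := h.isCompact_range.isBounded.exists_norm_le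
  refine ⟨B + M + 1, fun u => by have := hB _ ⟨u, rfl⟩; linarith, fun p hp => ?_⟩
  have hfar : ∀ u, M + 1 ≤ ‖z u - p‖ := fun u => by
    have h1 := hB _ ⟨u, rfl⟩
    have h2 := norm_sub_norm_le p (z u)
    rw [norm_sub_rev] at h2
    linarith
  have hpr : p ∉ range z := by
    rintro ⟨u, rfl⟩
    have := hfar u
    simp at this; linarith
  refine ⟨hpr, ?_⟩
  obtain ⟨n, hn⟩ := h.wind_int hpr
  have hle : ‖wind z dz p‖ ≤ M / (M + 1) * |2 * π - 0| := by
    refine intervalIntegral.norm_integral_le_of_norm_le_const fun u _ => ?_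
    rw [norm_mul, norm_inv, ← div_eq_mul_inv]
    exact div_le_div₀ hM0.le (hM u) (by linarith) (hfar u)
  rw [hn, sub_zero, abs_of_pos Real.two_pi_pos] at hle
  have h2 : ‖(2 * π * Complex.I : ℂ)‖ = 2 * π := by simp [Real.pi_pos.le]
  rw [norm_mul, h2, Complex.norm_intCast] at hle
  have h3 : |(n:ℝ)| < 1 := by
    have h4 : M / (M + 1) < 1 := by rw [div_lt_one (by linarith)]; linarith
    exact (le_of_mul_le_mul_right hle Real.two_pi_pos).trans_lt h4
  have h5 : n = 0 := by
    rw [← Int.cast_abs] at h3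
    exact Int.abs_lt_one_iff.1 (by exact_mod_cast h3)
  rw [hn, h5]; simp

end IsSimpleLoop

/-! ### Tubular neighbourhood and nearest points -/

namespace IsSimpleLoop

variable {z dz : ℝ → ℂ}

/-- On a uniform scale the curve is a small `C¹` perturbation of each of its tangent lines. -/
lemma exists_near (h : IsSimpleLoop z dz) : ∃ η > 0, ∀ u s, |s - u| ≤ η →
    ‖dz s / dz u - 1‖ ≤ 1 / 10 ∧ ‖(z s - z u) / dz u - ((s - u : ℝ) : ℂ)‖ ≤ 1 / 10 * |s - u| := by
  obtain ⟨m, hm0, hm⟩ := h.exists_lower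
  have huc : UniformContinuousOn dz (Icc (-π) (3 * π)) :=
    isCompact_Icc.uniformContinuousOn_of_continuous h.cont.continuousOn
  obtain ⟨δ₀, hδ₀, hδ₀'⟩ := Metric.uniformContinuousOn_iff.1 huc (m / 10) (by positivity)
  obtain ⟨δ, hδ, hδ'⟩ : ∃ δ > 0, ∀ s u, |s - u| < δ → ‖dz s - dz u‖ < m / 10 := by
    refine ⟨min δ₀ π, lt_min hδ₀ Real.pi_pos, fun s u hsu => ?_⟩
    obtain ⟨x, rfl⟩ : ∃ x, s = u + x := ⟨s - u, by ring⟩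
    rw [add_sub_cancel_left] at hsu
    have hp : Function.Periodic (fun u => dz (u + x) - dz u) (2 * π) := fun u => by
      simp only [h.dper u, show u + 2 * π + x = u + x + 2 * π by ring, h.dper (u + x)]
    obtain ⟨y, hy, he⟩ := hp.exists_mem_Ico₀ Real.two_pi_pos u
    change dz (u + x) - dz u = dz (y + x) - dz y at he
    rw [he, ← dist_eq_norm]
    have h1 := abs_lt.1 (hsu.trans_le (min_le_right _ _))
    refine hδ₀' _ ⟨?_, ?_⟩ _ ⟨?_, ?_⟩ ?_ <;> try linarith [hy.1, hy.2]
    rw [Real.dist_eq, add_sub_cancel_left]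
    exact hsu.trans_le (min_le_left _ _)
  have h1 : ∀ u s, |s - u| ≤ δ / 2 → ‖dz s / dz u - 1‖ ≤ 1 / 10 := by
    intro u s hs
    have hd := hδ' s u (by linarith)
    have e : dz s / dz u - 1 = (dz s - dz u) / dz u := by
      have := h.reg u
      field_simp
    rw [e, norm_div, div_le_iff₀ (norm_pos_iff.2 (h.reg u))]
    have := hm u
    linarith
  refine ⟨δ / 2, by positivity, fun u s hs => ⟨h1 u s hs, ?_⟩⟩
  -- mean value inequality for `s ↦ z s / dz u - s`
  have key := (convex_closedBall u (δ / 2)).norm_image_sub_le_of_norm_hasDerivWithin_le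
    (f := fun s => z s / dz u - (s : ℂ)) (f' := fun s => dz s / dz u - 1) (C := 1 / 10) (x := u) (y := s)
    (fun x _ => (((h.deriv x).div_const (dz u)).sub (HasDerivAt.ofReal_comp (hasDerivAt_id x))).hasDerivWithinAt)
    (fun x hx => h1 u x (by simpa [Real.dist_eq] using hx))
    (by simp; linarith) (by simpa [Real.dist_eq] using hs)
  rw [Real.norm_eq_abs] at key
  refine le_trans (le_of_eq ?_) key
  congr 1
  push_cast
  ring

/-- Points of a simple loop whose parameters are far apart stay uniformly far apart in the plane. -/
lemma exists_far (h : IsSimpleLoop z dz) {η : ℝ} (hη : 0 < η) :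
    ∃ c > 0, ∀ u x, |x| ≤ π → η ≤ |x| → c ≤ ‖z (u + x) - z u‖ := by
  have hK : IsCompact (Icc (0:ℝ) (2 * π) ×ˢ (Icc (-π) π ∩ {x | η ≤ |x|})) :=
    isCompact_Icc.prod (isCompact_Icc.inter_right (isClosed_le continuous_const continuous_abs))
  obtain ⟨c, hc, hc'⟩ := hK.exists_forall_le' (f := fun q : ℝ × ℝ => ‖z (q.1 + q.2) - z q.1‖) (a := 0)
    (((h.continuous.comp (continuous_fst.add continuous_snd)).sub
      (h.continuous.comp continuous_fst)).norm.continuousOn) (by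
    rintro ⟨u, x⟩ ⟨-, hx, hx'⟩
    rw [norm_pos_iff, sub_ne_zero]
    intro he
    have hxp : |x| ≤ π := abs_le.2 hx
    have := h.eq_of_eq he (by simp; linarith [Real.pi_pos])
    have hx0 : x = 0 := by simp at this; exact this
    subst hx0
    simp at hx'
    linarith)
  refine ⟨c, hc, fun u x hx hx' => ?_⟩
  have hp : Function.Periodic (fun u => z (u + x) - z u) (2 * π) := fun u => by
    simp only [h.per u, show u + 2 * π + x = u + x + 2 * π by ring, h.per (u + x)]
  obtain ⟨y, hy, he⟩ := hp.exists_mem_Ico₀ Real.two_pi_pos u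
  change z (u + x) - z u = z (y + x) - z y at he
  rw [he]
  exact hc' (y, x) ⟨⟨hy.1, hy.2.le⟩, abs_le.1 hx, hx'⟩

/-- A tubular neighbourhood: short normal segments meet the curve only at their foot. -/
lemma exists_tube (h : IsSimpleLoop z dz) : ∃ δ > 0, ∀ u (ε : ℝ), ε ≠ 0 → |ε| < δ →
    z u + ε * Complex.I * dz u ∉ range z := by
  obtain ⟨η, hη, hnear⟩ := h.exists_near
  obtain ⟨c, hc, hfar⟩ := h.exists_far hη
  obtain ⟨M, hM0, hM⟩ := h.exists_bound
  refine ⟨c / M, by positivity, fun u ε h0 hε => ?_⟩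
  rintro ⟨s, hs⟩
  have hp : Function.Periodic z (2 * π) := h.per
  obtain ⟨y, hy, he⟩ := hp.exists_mem_Ico Real.two_pi_pos s (u - π)
  rw [he] at hs
  have hy' : |y - u| ≤ π := by rw [abs_le]; constructor <;> linarith [hy.1, hy.2]
  rcases le_total |y - u| η with hl | hl
  · obtain ⟨-, h2⟩ := hnear u y hl
    have e : (z y - z u) / dz u = ε * Complex.I := by
      rw [hs]; have := h.reg u; field_simp; ring
    rw [e] at h2
    have h3 := (Complex.abs_re_le_norm _).trans h2
    have h4 := (Complex.abs_im_le_norm _).trans h2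
    simp only [Complex.sub_re, Complex.sub_im, Complex.ofReal_re, Complex.ofReal_im, Complex.mul_re,
      Complex.mul_im, Complex.I_re, Complex.I_im] at h3 h4
    simp at h3 h4
    have h5 : |y - u| = 0 := by
      rw [abs_sub_comm] at h3
      have := abs_nonneg (y - u)
      linarith
    rw [h5] at h4
    simp at h4
    exact h0 h4
  · have h1 := hfar u (y - u) hy' hl
    rw [add_sub_cancel, hs, add_sub_cancel_left, norm_mul, norm_mul, Complex.norm_real,
      Complex.norm_I, mul_one, Real.norm_eq_abs] at h1
    have h2 : |ε| * ‖dz u‖ ≤ |ε| * M := by gcongr; exact hM u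
    rw [lt_div_iff₀ hM0] at hε
    linarith

/-- Every point off the curve lies on a normal segment that avoids the curve except at its foot,
the foot being a nearest point of the curve. -/
lemma exists_nearest (h : IsSimpleLoop z dz) {p : ℂ} (hp : p ∉ range z) :
    ∃ u, ∃ r : ℝ, r ≠ 0 ∧ p = z u + r * Complex.I * dz u ∧
      ∀ t ∈ Ioc (0:ℝ) 1, z u + ((t * r : ℝ) : ℂ) * Complex.I * dz u ∉ range z := by
  obtain ⟨q, ⟨u, rfl⟩, hu⟩ := h.isCompact_range.exists_isMinOn (range_nonempty z)
    (f := fun q => ‖q - p‖) (by fun_prop)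
  have hmin : ∀ s, ‖z u - p‖ ≤ ‖z s - p‖ := fun s => hu ⟨s, rfl⟩
  have hd := ((h.deriv u).sub_const p).norm_sq
  have hloc : IsLocalMin (fun s => ‖z s - p‖ ^ 2) u :=
    Filter.Eventually.of_forall fun s => by
      have := hmin s
      simp only
      gcongr
  have h0 := hloc.hasDerivAt_eq_zero hd
  have hre : ((p - z u) / dz u).re = 0 := by
    rw [Complex.inner] at h0
    rw [Complex.div_re]
    simp at h0 ⊢
    rw [← add_div, div_eq_zero_iff]
    left
    linarith
  have hpe : p - z u = ((p - z u) / dz u).im * Complex.I * dz u := by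
    have h1 := Complex.re_add_im ((p - z u) / dz u)
    rw [hre] at h1
    simp only [Complex.ofReal_zero, zero_add] at h1
    rw [h1, div_mul_cancel₀ _ (h.reg u)]
  set r := ((p - z u) / dz u).im
  have hne : p - z u ≠ 0 := fun h0 => hp ⟨u, (sub_eq_zero.1 h0).symm⟩
  refine ⟨u, r, ?_, by rw [← hpe]; ring, ?_⟩
  · intro hr
    rw [hr] at hpe
    simp at hpe
    exact hne hpe
  · rintro t ⟨ht0, ht1⟩ ⟨s, hs⟩
    have h1 := hmin s
    have e : z s - p = ((1 - t : ℝ) : ℂ) * (z u - p) := by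
      rw [hs]
      push_cast
      linear_combination (-(t:ℂ)) * hpe
    rw [e, norm_mul, Complex.norm_real, Real.norm_eq_abs, abs_of_nonneg (by linarith)] at h1
    have : 0 < ‖z u - p‖ := by rw [norm_sub_rev]; exact norm_pos_iff.2 hne
    nlinarith

end IsSimpleLoop

/-! ### The jump of the winding number and the area formula -/

namespace IsSimpleLoop

variable {z dz : ℝ → ℂ}

/-- The kernel measuring the jump of the Cauchy integral across the curve is bounded below, up to a
factor `3 / 5`, by the Poisson kernel `ε / (x ^ 2 + ε ^ 2)` of the tangent line. Here `x` is the
parameter along the curve, `w` the position and `q` the velocity, both relative to the tangent. -/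
lemma kernel_bound {q w : ℂ} {x ε : ℝ} (hε : 0 < ε) (hq : ‖q - 1‖ ≤ 1 / 10)
    (hw : ‖w - (x : ℂ)‖ ≤ 1 / 10 * |x|) :
    (3 / 5) * (ε / (x ^ 2 + ε ^ 2)) ≤ (q * ε / (w ^ 2 + (ε : ℂ) ^ 2)).re := by
  set S : ℝ := x ^ 2 + ε ^ 2 with hS
  have hS0 : 0 < S := by positivity
  have hwx : ‖w + x‖ ≤ 21 / 10 * |x| := by
    have e : w + x = (w - x) + ((2 * x : ℝ) : ℂ) := by push_cast; ring
    rw [e]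
    refine (norm_add_le _ _).trans ?_
    rw [Complex.norm_real, Real.norm_eq_abs, abs_mul, abs_two]
    linarith
  have hD : ‖(w ^ 2 + (ε : ℂ) ^ 2) - (S : ℂ)‖ ≤ 21 / 100 * S := by
    have e : (w ^ 2 + (ε : ℂ) ^ 2) - (S : ℂ) = (w - x) * (w + x) := by rw [hS]; push_cast; ring
    rw [e, norm_mul]
    have := mul_le_mul hw hwx (norm_nonneg _) (by positivity)
    have h2 : |x| * |x| = x ^ 2 := by rw [← sq, sq_abs]
    have : 0 < ε ^ 2 := by positivity
    nlinarith
  set D := w ^ 2 + (ε : ℂ) ^ 2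
  have hDl : 79 / 100 * S ≤ ‖D‖ := by
    have h1 := norm_sub_norm_le (S : ℂ) D
    rw [norm_sub_rev, Complex.norm_real, Real.norm_eq_abs, abs_of_pos hS0] at h1
    linarith
  have hD0 : D ≠ 0 := by
    rw [← norm_pos_iff]; linarith
  have hS0' : (S : ℂ) ≠ 0 := by exact_mod_cast hS0.ne'
  have hN : ‖q * S - D‖ ≤ 31 / 100 * S := by
    have e : q * S - D = (q - 1) * S - (D - S) := by ring
    rw [e]
    refine (norm_sub_le _ _).trans ?_
    rw [norm_mul, Complex.norm_real, Real.norm_eq_abs, abs_of_pos hS0]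
    nlinarith
  have hr : ‖q * S / D - 1‖ ≤ 2 / 5 := by
    have e : q * S / D - 1 = (q * S - D) / D := by field_simp
    rw [e, norm_div, div_le_iff₀ (by linarith)]
    linarith
  have hre : 3 / 5 ≤ (q * S / D).re := by
    have := (abs_le.1 ((Complex.abs_re_le_norm _).trans hr)).1
    simp only [Complex.sub_re, Complex.one_re] at this
    linarith
  have e : q * ε / D = ((ε / S : ℝ) : ℂ) * (q * S / D) := by
    push_cast
    field_simp
  rw [e, Complex.re_ofReal_mul, mul_comm]
  exact mul_le_mul_of_nonneg_left hre (by positivity)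

/-- The winding number takes different values on the two sides of the curve, close to `z π`. -/
lemma exists_jump (h : IsSimpleLoop z dz) : ∃ δ > 0, ∀ ε : ℝ, 0 < ε → ε < δ →
    z π + ε * Complex.I * dz π ∉ range z → z π + ((-ε : ℝ) : ℂ) * Complex.I * dz π ∉ range z →
    wind z dz (z π + ε * Complex.I * dz π) ≠ wind z dz (z π + ((-ε : ℝ) : ℂ) * Complex.I * dz π) := by
  obtain ⟨η, hη, hnear⟩ := h.exists_near
  obtain ⟨c, hc, hfar⟩ := h.exists_far hη
  obtain ⟨M, hM0, hM⟩ := h.exists_bound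
  set a := dz π with ha
  have ha0 : a ≠ 0 := h.reg π
  have hna : 0 < ‖a‖ := norm_pos_iff.2 ha0
  set d := c / ‖a‖ with hd
  have hd0 : 0 < d := by positivity
  set K := (M / ‖a‖) / (d ^ 2 / 2) with hK
  have hK0 : 0 < K := by positivity
  refine ⟨min (min η π) (min (d / 2) (1 / (14 * K))), by positivity, fun ε hε hεδ hp hm heq => ?_⟩
  have hεη : ε < η := hεδ.trans_le ((min_le_left _ _).trans (min_le_left _ _))
  have hεπ : ε < π := hεδ.trans_le ((min_le_left _ _).trans (min_le_right _ _))
  have hεd : ε < d / 2 := hεδ.trans_le ((min_le_right _ _).trans (min_le_left _ _))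
  have hεK : ε < 1 / (14 * K) := hεδ.trans_le ((min_le_right _ _).trans (min_le_right _ _))
  have hKε : K * ε < 1 / 14 := by
    rw [lt_div_iff₀ (by positivity)] at hεK
    linarith
  set w : ℝ → ℂ := fun s => (z s - z π) / a with hw
  set g : ℝ → ℂ := fun s => (dz s / a) * ε / ((w s) ^ 2 + (ε : ℂ) ^ 2) with hg
  have hden : ∀ s, (w s) ^ 2 + (ε : ℂ) ^ 2 = (w s - ε * Complex.I) * (w s + ε * Complex.I) := fun s => by
    linear_combination ((ε:ℂ) ^ 2) * Complex.I_sq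
  have hw1 : ∀ s, w s - ε * Complex.I = (z s - (z π + ε * Complex.I * a)) / a := fun s => by
    simp only [hw]; field_simp; ring
  have hw2 : ∀ s, w s + ε * Complex.I = (z s - (z π + ((-ε : ℝ) : ℂ) * Complex.I * a)) / a := fun s => by
    simp only [hw]; push_cast; field_simp; ring
  have hn1 : ∀ s, z s - (z π + ε * Complex.I * a) ≠ 0 := fun s h0 => hp ⟨s, sub_eq_zero.1 h0⟩
  have hn2 : ∀ s, z s - (z π + ((-ε : ℝ) : ℂ) * Complex.I * a) ≠ 0 := fun s h0 => hm ⟨s, sub_eq_zero.1 h0⟩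
  have hden0 : ∀ s, (w s) ^ 2 + (ε : ℂ) ^ 2 ≠ 0 := fun s => by
    rw [hden, hw1, hw2]
    exact mul_ne_zero (div_ne_zero (hn1 s) ha0) (div_ne_zero (hn2 s) ha0)
  have hgc : Continuous g := by
    refine Continuous.div ((h.cont.div_const _).mul continuous_const) ?_ hden0
    exact (((h.continuous.sub continuous_const).div_const _).pow 2).add continuous_const
  -- `2 i g` is the difference of the Cauchy kernels at the two points, so `g` has integral zero
  have hI : ∫ s in (0:ℝ)..(2 * π), g s = 0 := by
    have e : ∀ s, dz s * (z s - (z π + ε * Complex.I * a))⁻¹ -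
        dz s * (z s - (z π + ((-ε : ℝ) : ℂ) * Complex.I * a))⁻¹ = 2 * Complex.I * g s := fun s => by
      have e1 : (z s - (z π + ε * Complex.I * a)) = a * (w s - ε * Complex.I) := by
        rw [hw1]; field_simp
      have e2 : (z s - (z π + ((-ε : ℝ) : ℂ) * Complex.I * a)) = a * (w s + ε * Complex.I) := by
        rw [hw2]; field_simp
      have h3 : w s - ε * Complex.I ≠ 0 := by rw [hw1]; exact div_ne_zero (hn1 s) ha0
      have h4 : w s + ε * Complex.I ≠ 0 := by rw [hw2]; exact div_ne_zero (hn2 s) ha0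
      rw [e1, e2]
      simp only [hg]
      rw [hden]
      field_simp
      ring
    have h1 := intervalIntegral.integral_sub (h.wind_integrable hp 0 (2 * π)) (h.wind_integrable hm 0 (2 * π))
    simp_rw [e] at h1
    rw [intervalIntegral.integral_const_mul] at h1
    have h2 : (2 * Complex.I) * ∫ s in (0:ℝ)..(2 * π), g s = 0 := by
      rw [h1]; exact sub_eq_zero.2 heq
    simpa using h2
  have hgr : Continuous fun s => (g s).re := Complex.continuous_re.comp hgc
  have hIr : ∫ s in (0:ℝ)..(2 * π), (g s).re = 0 := by
    have := intervalIntegral.intervalIntegral_re (𝕜 := ℂ) (hgc.intervalIntegrable (μ := volume) 0 (2 * π))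
    simp only [RCLike.re_eq_complex_re] at this
    rw [this, hI, Complex.zero_re]
  have hlow : ∀ s, |s - π| ≤ η → (3 / 5) * (ε / ((s - π) ^ 2 + ε ^ 2)) ≤ (g s).re := fun s hs =>
    kernel_bound hε (hnear π s hs).1 (hnear π s hs).2
  have hout : ∀ s ∈ Icc 0 (2 * π), -(K * ε) ≤ (g s).re := by
    intro s hs
    rcases le_total |s - π| η with hl | hl
    · refine le_trans ?_ (hlow s hl)
      have : 0 ≤ K * ε := by positivity
      have : 0 ≤ (3 / 5) * (ε / ((s - π) ^ 2 + ε ^ 2)) := by positivity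
      linarith
    · have h1 := hfar π (s - π) (by rw [abs_le]; constructor <;> linarith [hs.1, hs.2]) hl
      rw [add_sub_cancel] at h1
      have h2 : d ≤ ‖w s‖ := by
        simp only [hw, norm_div, hd]
        gcongr
      have h3 : d ^ 2 / 2 ≤ ‖(w s) ^ 2 + (ε : ℂ) ^ 2‖ := by
        have h4 := norm_sub_norm_le ((w s) ^ 2) (-(ε : ℂ) ^ 2)
        rw [sub_neg_eq_add, norm_neg, norm_pow, norm_pow, Complex.norm_real, Real.norm_eq_abs,
          abs_of_pos hε] at h4
        have h5 : d ^ 2 ≤ ‖w s‖ ^ 2 := by gcongr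
        nlinarith
      have h6 : ‖g s‖ ≤ K * ε := by
        simp only [hg, norm_div, norm_mul]
        rw [Complex.norm_real, Real.norm_eq_abs, abs_of_pos hε, hK,
          show M / ‖a‖ / (d ^ 2 / 2) * ε = M / ‖a‖ * ε / (d ^ 2 / 2) by ring]
        gcongr
        exact hM s
      linarith [(abs_le.1 ((Complex.abs_re_le_norm _).trans h6)).1]
  have hmid : ∀ s ∈ Icc (π - ε) (π + ε), 3 / 10 * ε⁻¹ ≤ (g s).re := by
    intro s hs
    have hsε : |s - π| ≤ ε := by rw [abs_le]; constructor <;> linarith [hs.1, hs.2]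
    refine le_trans ?_ (hlow s (hsε.trans hεη.le))
    have h1 : (s - π) ^ 2 ≤ ε ^ 2 := by rw [← sq_abs]; gcongr
    have h2 : ε / (2 * ε ^ 2) ≤ ε / ((s - π) ^ 2 + ε ^ 2) := by
      gcongr
      linarith
    have h3 : ε / (2 * ε ^ 2) = ε⁻¹ / 2 := by field_simp
    rw [h3] at h2
    linarith
  have hii : ∀ x y, IntervalIntegrable (fun s => (g s).re) volume x y := fun x y =>
    hgr.intervalIntegrable x y
  -- the part `|s - π| ≤ ε` contributes at least `3 / 5`, and the rest at least `-2 π K ε`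
  have i1 : ∫ s in (0:ℝ)..(π - ε), -(K * ε) ≤ ∫ s in (0:ℝ)..(π - ε), (g s).re :=
    intervalIntegral.integral_mono_on (by linarith) (by simp) (hii _ _) fun s hs =>
      hout s ⟨hs.1, by linarith [hs.2]⟩
  have i2 : ∫ s in (π - ε)..(π + ε), 3 / 10 * ε⁻¹ ≤ ∫ s in (π - ε)..(π + ε), (g s).re :=
    intervalIntegral.integral_mono_on (by linarith) (by simp) (hii _ _) hmid
  have i3 : ∫ s in (π + ε)..(2 * π), -(K * ε) ≤ ∫ s in (π + ε)..(2 * π), (g s).re :=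
    intervalIntegral.integral_mono_on (by linarith) (by simp) (hii _ _) fun s hs =>
      hout s ⟨by linarith [hs.1, Real.pi_pos], hs.2⟩
  rw [← intervalIntegral.integral_add_adjacent_intervals (hii 0 (π - ε)) (hii _ _),
    ← intervalIntegral.integral_add_adjacent_intervals (hii (π - ε) (π + ε)) (hii _ _)] at hIr
  simp only [intervalIntegral.integral_const, smul_eq_mul] at i1 i2 i3
  have e2 : (π + ε - (π - ε)) * (3 / 10 * ε⁻¹) = 3 / 5 := by field_simp; ring
  rw [e2] at i2
  have hπ : π < 3.15 := Real.pi_lt_d2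
  have hKε0 : 0 < K * ε := by positivity
  nlinarith

/-- The Cauchy kernel is integrable on disc times curve, because `p ↦ |z u - p|⁻¹` is integrable
over the disc uniformly in `u`. -/
lemma kernel_integrable (h : IsSimpleLoop z dz) {R : ℝ} (hR : ∀ u, ‖z u‖ < R) :
    Integrable (Function.uncurry fun (p : ℂ) (u : ℝ) => dz u * (z u - p)⁻¹)
      ((volume.restrict (Metric.ball (0:ℂ) R)).prod (volume.restrict (Ioc 0 (2 * π)))) := by
  obtain ⟨M, hM0, hM⟩ := h.exists_bound
  have hzc := h.continuous
  have hdc := h.cont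
  have hmeas : Measurable (Function.uncurry fun (p : ℂ) (u : ℝ) => dz u * (z u - p)⁻¹) := by
    have := hzc.measurable
    have := hdc.measurable
    simp only [Function.uncurry_def]
    fun_prop
  have hmeas' := hmeas.aestronglyMeasurable
    (μ := (volume.restrict (Metric.ball (0:ℂ) R)).prod (volume.restrict (Ioc 0 (2 * π))))
  rw [integrable_prod_iff' hmeas']
  refine ⟨Filter.Eventually.of_forall fun u => (integrableOn_inv (z u) R).const_mul (dz u), ?_⟩
  have hinv : IntegrableOn (fun p : ℂ => ‖p⁻¹‖) (Metric.ball (0:ℂ) (2 * R)) := by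
    have := (integrableOn_inv 0 (2 * R)).norm
    simpa [IntegrableOn] using this
  refine Integrable.of_bound (C := M * ∫ p in Metric.ball (0:ℂ) (2 * R), ‖p⁻¹‖)
    hmeas'.norm.prod_swap.integral_prod_right' ?_
  refine Filter.Eventually.of_forall fun u => ?_
  simp only [Function.uncurry_apply_pair, norm_mul]
  rw [integral_const_mul, norm_mul, norm_norm]
  have hint0 : 0 ≤ ∫ p in Metric.ball (0:ℂ) R, ‖(z u - p)⁻¹‖ := by positivity
  rw [Real.norm_of_nonneg hint0]
  refine mul_le_mul (hM u) ?_ hint0 hM0.le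
  have hmp := Measure.measurePreserving_sub_left (volume : Measure ℂ) (z u)
  have hemb := (MeasurableEquiv.subLeft (z u)).measurableEmbedding
  rw [← hmp.setIntegral_preimage_emb hemb (fun p => ‖p⁻¹‖)]
  refine setIntegral_mono_set ((hmp.integrableOn_comp_preimage hemb).2 hinv)
    (Filter.Eventually.of_forall fun p => norm_nonneg _) (LE.le.eventuallyLE ?_)
  intro p hp
  simp only [mem_preimage, Metric.mem_ball, dist_zero_right] at hp ⊢
  have := norm_sub_le (z u) p
  have := hR u
  linarith

/-- The area formula: over a disc containing the curve, `wind` integrates to `π ∮ z̄ dz`. The right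
hand side is `2πi` times the signed area, so the winding number integrates to the signed area. -/
lemma integral_wind (h : IsSimpleLoop z dz) {R : ℝ} (hR : ∀ u, ‖z u‖ < R) :
    ∫ p in Metric.ball (0:ℂ) R, wind z dz p =
      π * ∫ u in (0:ℝ)..(2 * π), dz u * (starRingEnd ℂ) (z u) := by
  have hπ : (0:ℝ) ≤ 2 * π := Real.two_pi_pos.le
  simp only [wind, intervalIntegral.integral_of_le hπ]
  rw [integral_integral_swap (h.kernel_integrable hR), ← integral_const_mul]
  refine integral_congr_ae (Filter.Eventually.of_forall fun u => ?_)
  simp only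
  rw [integral_const_mul, newton (hR u)]
  ring

lemma wind_integrableOn (h : IsSimpleLoop z dz) {R : ℝ} (hR : ∀ u, ‖z u‖ < R) :
    IntegrableOn (wind z dz) (Metric.ball (0:ℂ) R) := by
  have := (h.kernel_integrable hR).integral_prod_left
  have hπ : (0:ℝ) ≤ 2 * π := Real.two_pi_pos.le
  refine Integrable.congr this (Filter.Eventually.of_forall fun p => ?_)
  simp only [wind, intervalIntegral.integral_of_le hπ, Function.uncurry_apply_pair]

/-- The curve is the image of the degenerate map `w ↦ z (re w)`, hence a null set. -/
lemma range_null (h : IsSimpleLoop z dz) : volume (range z) = 0 := by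
  have hd : ∀ w : ℂ, HasFDerivAt (fun w : ℂ => z w.re)
      ((ContinuousLinearMap.toSpanSingleton ℝ (dz w.re)).comp Complex.reCLM) w := fun w =>
    (h.deriv w.re).hasFDerivAt.comp w Complex.reCLM.hasFDerivAt
  have h0 := addHaar_image_eq_zero_of_det_fderivWithin_eq_zero (volume : Measure ℂ) (s := univ)
    (fun w _ => (hd w).hasFDerivWithinAt) (fun w _ => by
      by_contra hdet
      have hu := LinearMap.ker_eq_bot_of_injective
        (LinearMap.injective_iff_surjective.2
          (LinearMap.equivOfDetNeZero _ hdet).surjective)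
      have hmem : Complex.I ∈ LinearMap.ker
          ((((ContinuousLinearMap.toSpanSingleton ℝ (dz w.re)).comp Complex.reCLM) : ℂ →L[ℝ] ℂ) : ℂ →ₗ[ℝ] ℂ) := by
        simp
      erw [hu] at hmem
      simp at hmem)
  refine measure_mono_null ?_ h0
  rintro _ ⟨u, rfl⟩
  exact ⟨(u : ℂ), mem_univ _, by simp⟩

/-- Off the curve the winding number takes only two values, zero and a nonzero one. -/
lemma exists_two_values (h : IsSimpleLoop z dz) : ∃ m ≠ 0,
    (∀ p ∉ range z, wind z dz p = 0 ∨ wind z dz p = m) ∧ ∃ p ∉ range z, wind z dz p = m := by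
  obtain ⟨δ, hδ, htube⟩ := h.exists_tube
  obtain ⟨δ', hδ', hjump⟩ := h.exists_jump
  obtain ⟨R, hR, hR0⟩ := h.exists_wind_zero
  -- the winding number takes one value along all short normals on the same side of the curve
  have hside : ∀ J : Set ℝ, IsPreconnected J → (∀ ε ∈ J, ε ≠ 0 ∧ |ε| < δ) → ∀ u v, ∀ ε ∈ J, ∀ ε' ∈ J,
      wind z dz (z u + (ε : ℂ) * Complex.I * dz u) = wind z dz (z v + (ε' : ℂ) * Complex.I * dz v) := by
    intro J hJ hJ' u v ε hε ε' hε'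
    have hzc := h.continuous
    have hdc := h.cont
    refine h.wind_const (S := (fun q : ℝ × ℝ => z q.1 + (q.2 : ℂ) * Complex.I * dz q.1) '' (univ ×ˢ J))
      ((isPreconnected_univ.prod hJ).image _ (by fun_prop)) ?_
      ⟨(u, ε), ⟨mem_univ _, hε⟩, rfl⟩ ⟨(v, ε'), ⟨mem_univ _, hε'⟩, rfl⟩
    rintro _ ⟨⟨u, ε⟩, ⟨-, hε⟩, rfl⟩
    exact htube u ε (hJ' ε hε).1 (hJ' ε hε).2
  set e := min δ δ' / 2 with he
  have he0 : 0 < e := by positivity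
  have heδ : e < δ := by
    have := min_le_left δ δ'
    linarith
  have heδ' : e < δ' := by
    have := min_le_right δ δ'
    linarith
  set nL := wind z dz (z π + (e : ℂ) * Complex.I * dz π) with hnL
  set nR := wind z dz (z π + ((-e : ℝ) : ℂ) * Complex.I * dz π) with hnR
  have hpL := htube π e he0.ne' (by rwa [abs_of_pos he0])
  have hpR := htube π (-e) (by linarith) (by rwa [abs_neg, abs_of_pos he0])
  have hne : nL ≠ nR := hjump e he0 heδ' hpL hpR
  have hpos := hside (Ioo 0 δ) isPreconnected_Ioo fun ε hε => ⟨hε.1.ne', by rw [abs_of_pos hε.1]; exact hε.2⟩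
  have hneg := hside (Ioo (-δ) 0) isPreconnected_Ioo fun ε hε => ⟨hε.2.ne, by rw [abs_of_neg hε.2]; linarith [hε.1]⟩
  have hval : ∀ p ∉ range z, wind z dz p = nL ∨ wind z dz p = nR := by
    intro p hp
    obtain ⟨u, r, hr, rfl, hseg⟩ := h.exists_nearest hp
    obtain ⟨t, ht, htr⟩ : ∃ t ∈ Ioc (0:ℝ) 1, |t * r| < δ := by
      have hr0 : 0 < |r| := abs_pos.2 hr
      refine ⟨min 1 (δ / (2 * |r|)), ⟨by positivity, min_le_left _ _⟩, ?_⟩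
      rw [abs_mul, abs_of_pos (by positivity)]
      calc min 1 (δ / (2 * |r|)) * |r| ≤ (δ / (2 * |r|)) * |r| := by gcongr; exact min_le_right _ _
        _ = δ / 2 := by field_simp
        _ < δ := by linarith
    have h1 : wind z dz (z u + (r : ℂ) * Complex.I * dz u) =
        wind z dz (z u + ((t * r : ℝ) : ℂ) * Complex.I * dz u) := by
      refine h.wind_const (S := (fun t : ℝ => z u + ((t * r : ℝ) : ℂ) * Complex.I * dz u) '' Ioc 0 1)
        (isPreconnected_Ioc.image _ (by fun_prop)) ?_ ⟨1, by simp, by simp⟩ ⟨t, ht, rfl⟩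
      rintro _ ⟨t, ht, rfl⟩
      exact hseg t ht
    rw [h1]
    rcases lt_or_gt_of_ne hr with hr | hr
    · right
      have : t * r < 0 := mul_neg_of_pos_of_neg ht.1 hr
      exact hneg u π (t * r) ⟨by linarith [(abs_lt.1 htr).1], this⟩ (-e) ⟨by linarith, by linarith⟩
    · left
      have : 0 < t * r := mul_pos ht.1 hr
      exact hpos u π (t * r) ⟨this, (abs_lt.1 htr).2⟩ e ⟨he0, heδ⟩
  obtain ⟨hfar, hfar0⟩ := hR0 (|R| : ℝ) (by simp [le_abs_self])
  rcases hval _ hfar with h0 | h0 <;> rw [hfar0] at h0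
  · refine ⟨nR, fun h => hne (by rw [← h0, h]), fun p hp => ?_, _, hpR, rfl⟩
    rw [h0]; exact hval p hp
  · refine ⟨nL, fun h => hne (by rw [← h0, h]), fun p hp => ?_, _, hpL, rfl⟩
    rw [h0]; exact (hval p hp).symm

/-- A regular simple closed curve has nonzero signed area: `wind / m` is almost everywhere `0` or
`1`, it is `1` on a nonempty open set, and its integral is a multiple of the signed area. -/
theorem area_ne_zero (h : IsSimpleLoop z dz) :
    ∫ u in (0:ℝ)..(2 * π), dz u * (starRingEnd ℂ) (z u) ≠ 0 := by
  intro h0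
  obtain ⟨R, hR, hR0⟩ := h.exists_wind_zero
  obtain ⟨m, hm, hval, p₁, hp₁, hw₁⟩ := h.exists_two_values
  have hInt : IntegrableOn (fun p => wind z dz p / m) (Metric.ball (0:ℂ) R) :=
    (h.wind_integrableOn hR).div_const m
  have hzero : ∫ p in Metric.ball (0:ℂ) R, (wind z dz p / m).re = 0 := by
    have := integral_re (𝕜 := ℂ) hInt
    simp only [RCLike.re_eq_complex_re] at this
    rw [this, integral_div, h.integral_wind hR, h0]
    simp
  have hnn : 0 ≤ᵐ[volume.restrict (Metric.ball (0:ℂ) R)] fun p => (wind z dz p / m).re := by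
    refine ae_restrict_of_ae ?_
    filter_upwards [compl_mem_ae_iff.2 h.range_null] with p hp
    rcases hval p hp with h1 | h1 <;> simp [h1, hm]
  have hae := (setIntegral_eq_zero_iff_of_nonneg_ae hnn hInt.re).1 hzero
  have hp₁R : p₁ ∈ Metric.ball (0:ℂ) R := by
    by_contra hc
    simp only [Metric.mem_ball, dist_zero_right, not_lt] at hc
    exact hm (by rw [← hw₁, (hR0 p₁ hc).2])
  have hopen : IsOpen (range z)ᶜ := h.isCompact_range.isClosed.isOpen_compl
  -- the winding number equals `m` in a whole neighbourhood of `p₁`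
  have hev : ∀ᶠ p in 𝓝 p₁, p ∈ Metric.ball (0:ℂ) R ∧ wind z dz p = m := by
    have hc : ContinuousAt (wind z dz) p₁ := h.wind_continuousOn.continuousAt (hopen.mem_nhds hp₁)
    have h1 : ∀ᶠ p in 𝓝 p₁, wind z dz p ≠ 0 := hc.eventually_ne (by rwa [hw₁])
    filter_upwards [h1, hopen.mem_nhds hp₁, Metric.isOpen_ball.mem_nhds hp₁R] with p h1 h2 h3
    exact ⟨h3, (hval p h2).resolve_left h1⟩
  obtain ⟨U, hU, hUo, hpU⟩ := eventually_nhds_iff.1 hev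
  rw [Filter.EventuallyEq, ae_restrict_iff' Metric.isOpen_ball.measurableSet, ae_iff] at hae
  refine (hUo.measure_pos volume ⟨p₁, hpU⟩).ne' (measure_mono_null ?_ hae)
  intro p hp
  obtain ⟨h1, h2⟩ := hU p hp
  simp only [mem_ofPred_eq, Classical.not_imp]
  refine ⟨h1, ?_⟩
  simp [h2, hm]

end IsSimpleLoop

/-! ### The first variation of perimeter and area -/

section Variation

variable {ε : ℝ} {C : ℝ → ℝ → ℝ × ℝ}

lemma hasDerivAt_partial {G : ℝ × ℝ → ℝ × ℝ} {t u : ℝ} (h : DifferentiableAt ℝ G (t, u)) :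
    HasDerivAt (fun s => G (s, u)) (fderiv ℝ G (t, u) (1, 0)) t ∧
      HasDerivAt (fun s => G (t, s)) (fderiv ℝ G (t, u) (0, 1)) u :=
  ⟨h.hasFDerivAt.comp_hasDerivAt t ((hasDerivAt_id t).prodMk (hasDerivAt_const t u)),
    h.hasFDerivAt.comp_hasDerivAt u ((hasDerivAt_const u t).prodMk (hasDerivAt_id u))⟩

/-- The first and second partial derivatives of a smooth family of curves, with equality of the
mixed derivatives `∂_t ∂_u C` and `∂_u ∂_t C` (both are `W`). -/
lemma exists_partials
    (hC : ContDiffOn ℝ (⊤ : ℕ∞) (Function.uncurry C) (Ioo (-ε) ε ×ˢ (univ : Set ℝ))) :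
    ∃ W : ℝ → ℝ → ℝ × ℝ,
      (∀ t ∈ Ioo (-ε) ε, ∀ u, HasDerivAt (fun s => C s u) (Xf C t u) t ∧
        HasDerivAt (C t) (Cu C t u) u ∧ HasDerivAt (Cu C t) (Cuu C t u) u ∧
        HasDerivAt (fun s => Cu C s u) (W t u) t ∧ HasDerivAt (Xf C t) (W t u) u) ∧
      ContinuousOn (Function.uncurry (Xf C)) (Ioo (-ε) ε ×ˢ univ) ∧
      ContinuousOn (Function.uncurry (Cu C)) (Ioo (-ε) ε ×ˢ univ) ∧
      ContinuousOn (Function.uncurry (Cuu C)) (Ioo (-ε) ε ×ˢ univ) ∧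
      ContinuousOn (Function.uncurry W) (Ioo (-ε) ε ×ˢ univ) := by
  set Ω : Set (ℝ × ℝ) := Ioo (-ε) ε ×ˢ univ with hΩ
  have hΩo : IsOpen Ω := isOpen_Ioo.prod isOpen_univ
  set F := Function.uncurry C with hF
  have hmem : ∀ t ∈ Ioo (-ε) ε, ∀ u : ℝ, (t, u) ∈ Ω := fun t ht u => ⟨ht, mem_univ _⟩
  have hdiff : ∀ p ∈ Ω, DifferentiableAt ℝ F p := fun p hp =>
    (hC.contDiffAt (hΩo.mem_nhds hp)).differentiableAt (by simp)
  have hfd : ContDiffOn ℝ (⊤ : ℕ∞) (fderiv ℝ F) Ω := hC.fderiv_of_isOpen hΩo (by simp)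
  have hD : ∀ w : ℝ × ℝ, ContDiffOn ℝ (⊤ : ℕ∞) (fun p => fderiv ℝ F p w) Ω := fun w =>
    hfd.clm_apply contDiffOn_const
  have hDd : ∀ w : ℝ × ℝ, ∀ p ∈ Ω, DifferentiableAt ℝ (fun p => fderiv ℝ F p w) p := fun w p hp =>
    ((hD w).contDiffAt (hΩo.mem_nhds hp)).differentiableAt (by simp)
  have hDc : ∀ w w' : ℝ × ℝ, ContinuousOn (fun p => fderiv ℝ (fun p => fderiv ℝ F p w) p w') Ω :=
    fun w w' => ((((hD w).fderiv_of_isOpen (m := (⊤ : ℕ∞)) hΩo (by simp)).clm_apply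
      contDiffOn_const)).continuousOn
  have hX : ∀ t ∈ Ioo (-ε) ε, ∀ u, Xf C t u = fderiv ℝ F (t, u) (1, 0) := fun t ht u =>
    (hasDerivAt_partial (hdiff _ (hmem t ht u))).1.deriv
  have hU : ∀ t ∈ Ioo (-ε) ε, ∀ u, Cu C t u = fderiv ℝ F (t, u) (0, 1) := fun t ht u =>
    (hasDerivAt_partial (hdiff _ (hmem t ht u))).2.deriv
  have hXf : ∀ t ∈ Ioo (-ε) ε, Xf C t = fun u => fderiv ℝ F (t, u) (1, 0) := fun t ht =>
    funext (hX t ht)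
  have hUf : ∀ t ∈ Ioo (-ε) ε, Cu C t = fun u => fderiv ℝ F (t, u) (0, 1) := fun t ht =>
    funext (hU t ht)
  have hUU : ∀ t ∈ Ioo (-ε) ε, ∀ u,
      Cuu C t u = fderiv ℝ (fun p => fderiv ℝ F p (0, 1)) (t, u) (0, 1) := fun t ht u => by
    change deriv (Cu C t) u = _
    rw [hUf t ht]
    exact (hasDerivAt_partial (hDd (0, 1) _ (hmem t ht u))).2.deriv
  have hsymm : ∀ p ∈ Ω, fderiv ℝ (fun p => fderiv ℝ F p (0, 1)) p (1, 0) =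
      fderiv ℝ (fun p => fderiv ℝ F p (1, 0)) p (0, 1) := fun p hp => by
    have hs : IsSymmSndFDerivAt ℝ F p :=
      (hC.contDiffAt (hΩo.mem_nhds hp)).isSymmSndFDerivAt
        (by simpa using WithTop.coe_le_coe.2 (le_top : (2 : ℕ∞) ≤ ⊤))
    have hd2 : DifferentiableAt ℝ (fderiv ℝ F) p :=
      (hfd.contDiffAt (hΩo.mem_nhds hp)).differentiableAt (by simp)
    rw [fderiv_clm_apply hd2 (differentiableAt_const _), fderiv_clm_apply hd2 (differentiableAt_const _)]
    simpa using hs.eq (1, 0) (0, 1)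
  refine ⟨fun t u => fderiv ℝ (fun p => fderiv ℝ F p (0, 1)) (t, u) (1, 0), ?_, ?_, ?_, ?_, hDc _ _⟩
  · intro t ht u
    refine ⟨?_, ?_, ?_, ?_, ?_⟩
    · rw [hX t ht]; exact (hasDerivAt_partial (hdiff _ (hmem t ht u))).1
    · rw [hU t ht]; exact (hasDerivAt_partial (hdiff _ (hmem t ht u))).2
    · rw [hUU t ht, hUf t ht]; exact (hasDerivAt_partial (hDd (0, 1) _ (hmem t ht u))).2
    · refine (hasDerivAt_partial (hDd (0, 1) _ (hmem t ht u))).1.congr_of_eventuallyEq ?_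
      filter_upwards [isOpen_Ioo.mem_nhds ht] with s hs
      exact hU s hs u
    · rw [hXf t ht]
      simp only [hsymm _ (hmem t ht u)]
      exact (hasDerivAt_partial (hDd (1, 0) _ (hmem t ht u))).2
  · exact (hD (1, 0)).continuousOn.congr fun p hp => hX p.1 hp.1 p.2
  · exact (hD (0, 1)).continuousOn.congr fun p hp => hU p.1 hp.1 p.2
  · exact (hDc (0, 1) (0, 1)).congr fun p hp => hUU p.1 hp.1 p.2

/-- Differentiation under the integral sign over one period. -/
lemma hasDerivAt_integral_strip {F F' : ℝ → ℝ → ℝ}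
    (hF : ContinuousOn (Function.uncurry F) (Ioo (-ε) ε ×ˢ univ))
    (hF' : ContinuousOn (Function.uncurry F') (Ioo (-ε) ε ×ˢ univ))
    (hd : ∀ t ∈ Ioo (-ε) ε, ∀ u, HasDerivAt (fun s => F s u) (F' t u) t) {t : ℝ}
    (ht : t ∈ Ioo (-ε) ε) :
    HasDerivAt (fun s => ∫ u in (0:ℝ)..(2 * π), F s u) (∫ u in (0:ℝ)..(2 * π), F' t u) t := by
  have hslice : ∀ {G : ℝ → ℝ → ℝ}, ContinuousOn (Function.uncurry G) (Ioo (-ε) ε ×ˢ univ) →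
      ∀ s ∈ Ioo (-ε) ε, Continuous (G s) := fun {G} hG s hs => by
    have : Continuous fun u : ℝ => (s, u) := by fun_prop
    exact hG.comp_continuous this fun u => ⟨hs, mem_univ _⟩
  obtain ⟨δ, hδ, hball⟩ := Metric.nhds_basis_closedBall.mem_iff.1 (isOpen_Ioo.mem_nhds ht)
  have hcpt : IsCompact (Metric.closedBall t δ ×ˢ Icc (0:ℝ) (2 * π)) :=
    (isCompact_closedBall _ _).prod isCompact_Icc
  obtain ⟨B, hB⟩ := hcpt.exists_bound_of_continuousOn
    (hF'.mono (prod_mono hball (subset_univ _)))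
  refine (intervalIntegral.hasDerivAt_integral_of_dominated_loc_of_deriv_le
    (s := Metric.closedBall t δ) (bound := fun _ => B) (F' := F')
    (Metric.closedBall_mem_nhds t hδ) ?_ ((hslice hF t ht).intervalIntegrable _ _)
    (hslice hF' t ht).aestronglyMeasurable ?_ (by simp) ?_).2
  · filter_upwards [isOpen_Ioo.mem_nhds ht] with s hs
    exact (hslice hF s hs).aestronglyMeasurable
  · refine Filter.Eventually.of_forall fun u hu s hs => ?_
    rw [uIoc_of_le Real.two_pi_pos.le] at hu
    exact hB (s, u) ⟨hs, hu.1.le, hu.2⟩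
  · exact Filter.Eventually.of_forall fun u _ s hs => hd s (hball hs) u

lemma spd_sq (C : ℝ → ℝ → ℝ × ℝ) (t u : ℝ) :
    spd C t u ^ 2 = (Cu C t u).1 ^ 2 + (Cu C t u).2 ^ 2 := by
  rw [spd, Real.sq_sqrt (by positivity)]

lemma hasDerivAt_fst {f : ℝ → ℝ × ℝ} {f' : ℝ × ℝ} {x : ℝ} (h : HasDerivAt f f' x) :
    HasDerivAt (fun s => (f s).1) f'.1 x := by
  exact (ContinuousLinearMap.fst ℝ ℝ ℝ).hasFDerivAt.comp_hasDerivAt x h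

lemma hasDerivAt_snd {f : ℝ → ℝ × ℝ} {f' : ℝ × ℝ} {x : ℝ} (h : HasDerivAt f f' x) :
    HasDerivAt (fun s => (f s).2) f'.2 x := by
  exact (ContinuousLinearMap.snd ℝ ℝ ℝ).hasFDerivAt.comp_hasDerivAt x h

lemma hasDerivAt_norm {f : ℝ → ℝ × ℝ} {f' : ℝ × ℝ} {x : ℝ} (h : HasDerivAt f f' x)
    (h0 : 0 < Real.sqrt ((f x).1 ^ 2 + (f x).2 ^ 2)) :
    HasDerivAt (fun s => Real.sqrt ((f s).1 ^ 2 + (f s).2 ^ 2))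
      (dot2 (f x) f' / Real.sqrt ((f x).1 ^ 2 + (f x).2 ^ 2)) x := by
  have h1 := (((hasDerivAt_fst h).pow 2).add ((hasDerivAt_snd h).pow 2)).sqrt
    (Real.sqrt_pos.1 h0).ne'
  refine h1.congr_deriv ?_
  simp only [dot2, Pi.add_apply, Pi.pow_apply]
  field_simp
  ring

/-- A period of a derivative integrates to zero. -/
lemma integral_deriv_eq_zero {H H' : ℝ → ℝ} (h : ∀ u, HasDerivAt H (H' u) u) (hc : Continuous H')
    (hp : H (2 * π) = H 0) : ∫ u in (0:ℝ)..(2 * π), H' u = 0 := by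
  rw [intervalIntegral.integral_eq_sub_of_hasDerivAt (fun u _ => h u) (hc.intervalIntegrable _ _),
    hp, sub_self]

/-- A regular simple closed curve bounds a nonzero signed area. -/
lemma ar0_ne_zero {t : ℝ} (hd : ∀ u, HasDerivAt (C t) (Cu C t u) u) (hc : Continuous (Cu C t))
    (hclosed : ∀ u, C t (u + 2 * π) = C t u) (hsimple : InjOn (C t) (Ico 0 (2 * π)))
    (hv : ∀ u, 0 < spd C t u) : ar0 C t ≠ 0 := by
  have hCc : Continuous (C t) := continuous_iff_continuousAt.2 fun u => (hd u).continuousAt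
  have hloop : IsSimpleLoop (fun u => ((C t u).1 : ℂ) + (C t u).2 * Complex.I)
      (fun u => ((Cu C t u).1 : ℂ) + (Cu C t u).2 * Complex.I) := by
    refine ⟨fun u => ?_, by fun_prop, fun u => by simp only [hclosed], ?_, ?_⟩
    · exact (hasDerivAt_fst (hd u)).ofReal_comp.add ((hasDerivAt_snd (hd u)).ofReal_comp.mul_const _)
    · intro u hu s hs he
      refine hsimple hu hs (Prod.ext ?_ ?_)
      · simpa using congrArg Complex.re he
      · simpa using congrArg Complex.im he
    · intro u h0
      have h1 : (Cu C t u).1 = 0 := by simpa using congrArg Complex.re h0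
      have h2 : (Cu C t u).2 = 0 := by simpa using congrArg Complex.im h0
      have := hv u
      rw [spd, h1, h2] at this
      simp at this
  intro h0
  apply hloop.area_ne_zero
  have e : ∀ u, (((Cu C t u).1 : ℂ) + (Cu C t u).2 * Complex.I) *
      (starRingEnd ℂ) (((C t u).1 : ℂ) + (C t u).2 * Complex.I) =
      (((C t u).1 * (Cu C t u).1 + (C t u).2 * (Cu C t u).2 : ℝ) : ℂ) +
        (((C t u).1 * (Cu C t u).2 - (C t u).2 * (Cu C t u).1 : ℝ) : ℂ) * Complex.I := fun u => by
    simp only [map_add, map_mul, Complex.conj_ofReal, Complex.conj_I]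
    push_cast
    linear_combination (-((Cu C t u).2 : ℂ) * (C t u).2) * Complex.I_sq
  simp_rw [e]
  have hre : ∫ u in (0:ℝ)..(2 * π), ((C t u).1 * (Cu C t u).1 + (C t u).2 * (Cu C t u).2) = 0 := by
    refine integral_deriv_eq_zero (H := fun u => ((C t u).1 ^ 2 + (C t u).2 ^ 2) / 2) (fun u => ?_)
      (by fun_prop) ?_
    · refine ((((hasDerivAt_fst (hd u)).pow 2).add ((hasDerivAt_snd (hd u)).pow 2)).div_const 2).congr_deriv ?_
      simp
      ring
    · have := hclosed 0
      rw [zero_add] at this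
      simp only [this]
  have him : ∫ u in (0:ℝ)..(2 * π), ((C t u).1 * (Cu C t u).2 - (C t u).2 * (Cu C t u).1) = 0 := by
    rw [ar0] at h0
    simpa using h0
  rw [intervalIntegral.integral_add (Continuous.intervalIntegrable (by fun_prop) _ _)
    (Continuous.intervalIntegrable (by fun_prop) _ _), intervalIntegral.integral_mul_const,
    intervalIntegral.integral_ofReal, intervalIntegral.integral_ofReal, hre, him]
  simp

/-- The pointwise identity `∂_t v - ∂_u ⟨T, X⟩ = ρ ⟨X, ν⟩ v`, in coordinates: `a = ∂_u C`,
`b = ∂²_u C`, `x = X`, `w = ∂_u X` and `v = |a|`. -/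
lemma speed_identity {a₁ a₂ b₁ b₂ x₁ x₂ w₁ w₂ v : ℝ} (h0 : v ≠ 0) (hs : v ^ 2 = a₁ ^ 2 + a₂ ^ 2) :
    (a₁ * w₁ + a₂ * w₂) / v - ((b₁ * x₁ + b₂ * x₂ + (a₁ * w₁ + a₂ * w₂)) * v -
      (a₁ * x₁ + a₂ * x₂) * ((a₁ * b₁ + a₂ * b₂) / v)) / v ^ 2 =
    (a₁ * b₂ - a₂ * b₁) / v ^ 3 * (x₁ * (v⁻¹ * a₂) + x₂ * (v⁻¹ * -a₁)) * v := by
  have h1 : (a₁ * x₁ + a₂ * x₂) * (a₁ * b₁ + a₂ * b₂) - (b₁ * x₁ + b₂ * x₂) * v ^ 2 =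
      (a₁ * b₂ - a₂ * b₁) * (x₁ * a₂ - x₂ * a₁) := by
    linear_combination (-(b₁ * x₁ + b₂ * x₂)) * hs
  calc _ = ((a₁ * x₁ + a₂ * x₂) * (a₁ * b₁ + a₂ * b₂) - (b₁ * x₁ + b₂ * x₂) * v ^ 2) / v ^ 3 := by
        field_simp
        ring
    _ = _ := by
        rw [h1]
        field_simp
        ring

end Variation

/-- For a smooth family of simple closed plane curves, the derivative of
`σ/λ²` is `(σ/λ²) ⬝ (1/σ) ∫₀^{2π} ⟨X, (ρ − 2σ/λ)ν⟩ v du`; this expresses the renormalized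
curvature flow `∂_t C = (−ρ + 2σ/λ)ν` as the gradient descent flow of
`D ↦ ln(σ(∂D)/λ(D)²)` for the `L²(ds/σ)` metric on normal fields. -/
theorem stmt0 (ε : ℝ) (hε : 0 < ε) (C : ℝ → ℝ → ℝ × ℝ)
    (hC : ContDiffOn ℝ (⊤ : ℕ∞) (Function.uncurry C) (Ioo (-ε) ε ×ˢ (univ : Set ℝ)))
    (hclosed : ∀ t ∈ Ioo (-ε) ε, ∀ u : ℝ, C t (u + 2 * π) = C t u)
    (hsimple : ∀ t ∈ Ioo (-ε) ε, InjOn (C t) (Ico 0 (2 * π)))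
    (hv : ∀ t ∈ Ioo (-ε) ε, ∀ u : ℝ, 0 < spd C t u) :
    ∀ t ∈ Ioo (-ε) ε,
      HasDerivAt (fun s => per0 C s / (ar0 C s) ^ 2)
        (per0 C t / (ar0 C t) ^ 2 *
          ((per0 C t)⁻¹ *
            ∫ u in (0:ℝ)..(2 * π),
              dot2 (Xf C t u)
                ((curv C t u - 2 * per0 C t / ar0 C t) • nrm C t u) * spd C t u)) t := by
  intro t ht
  obtain ⟨W, hpart, hXc, hUc, hUUc, hWc⟩ := exists_partials hC
  have hslice : ∀ {G : ℝ → ℝ → ℝ × ℝ}, ContinuousOn (Function.uncurry G) (Ioo (-ε) ε ×ˢ univ) →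
      Continuous (G t) := fun {G} hG => by
    have : Continuous fun u : ℝ => (t, u) := by fun_prop
    exact hG.comp_continuous this fun u => ⟨ht, mem_univ _⟩
  have cC : Continuous (C t) := hslice hC.continuousOn
  have cX : Continuous (Xf C t) := hslice hXc
  have cU : Continuous (Cu C t) := hslice hUc
  have cUU : Continuous (Cuu C t) := hslice hUUc
  have cW : Continuous (W t) := hslice hWc
  have cv : Continuous (spd C t) := by unfold spd; fun_prop
  have hv0 : ∀ u, spd C t u ≠ 0 := fun u => (hv t ht u).ne'
  have pC : C t (2 * π) = C t 0 := by simpa using hclosed t ht 0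
  have pX : Xf C t (2 * π) = Xf C t 0 := by
    refine Filter.EventuallyEq.deriv_eq ?_
    filter_upwards [isOpen_Ioo.mem_nhds ht] with s hs
    simpa using hclosed s hs 0
  have pU : Cu C t (2 * π) = Cu C t 0 := by
    have h1 := (hpart t ht (0 + 2 * π)).2.1.comp_add_const 0 (2 * π)
    simp_rw [hclosed t ht] at h1
    have := h1.unique (hpart t ht 0).2.1
    rwa [zero_add] at this
  have pv : spd C t (2 * π) = spd C t 0 := by rw [spd, spd, pU]
  have hX1 := continuous_fst.comp_continuousOn hXc
  have hX2 := continuous_snd.comp_continuousOn hXc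
  have hU1 := continuous_fst.comp_continuousOn hUc
  have hU2 := continuous_snd.comp_continuousOn hUc
  have hW1 := continuous_fst.comp_continuousOn hWc
  have hW2 := continuous_snd.comp_continuousOn hWc
  have hC1 := continuous_fst.comp_continuousOn hC.continuousOn
  have hC2 := continuous_snd.comp_continuousOn hC.continuousOn
  have hvc : ContinuousOn (Function.uncurry (spd C)) (Ioo (-ε) ε ×ˢ univ) :=
    ((hU1.pow 2).add (hU2.pow 2)).sqrt
  have hper : HasDerivAt (per0 C)
      (∫ u in (0:ℝ)..(2 * π), curv C t u * dot2 (Xf C t u) (nrm C t u) * spd C t u) t := by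
    have h1 := hasDerivAt_integral_strip (F := spd C) (F' := fun t u => dot2 (Cu C t u) (W t u) / spd C t u)
      hvc (((hU1.mul hW1).add (hU2.mul hW2)).div hvc fun p hp => (hv p.1 hp.1 p.2).ne')
      (fun t ht u => hasDerivAt_norm (hpart t ht u).2.2.2.1 (hv t ht u)) ht
    refine h1.congr_deriv ?_
    have hH := integral_deriv_eq_zero (H := fun u => dot2 (Cu C t u) (Xf C t u) / spd C t u)
      (H' := fun u => ((dot2 (Cuu C t u) (Xf C t u) + dot2 (Cu C t u) (W t u)) * spd C t u -
        dot2 (Cu C t u) (Xf C t u) * (dot2 (Cu C t u) (Cuu C t u) / spd C t u)) / spd C t u ^ 2)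
      (fun u => by
        have hu := hpart t ht u
        have hdot : HasDerivAt (fun u => dot2 (Cu C t u) (Xf C t u))
            (dot2 (Cuu C t u) (Xf C t u) + dot2 (Cu C t u) (W t u)) u := by
          refine (((hasDerivAt_fst hu.2.2.1).mul (hasDerivAt_fst hu.2.2.2.2)).add
            ((hasDerivAt_snd hu.2.2.1).mul (hasDerivAt_snd hu.2.2.2.2))).congr_deriv ?_
          simp only [dot2]
          ring
        exact hdot.div (hasDerivAt_norm hu.2.2.1 (hv t ht u)) (hv0 u))
      (by
        unfold dot2
        refine Continuous.div ?_ (by fun_prop) fun u => pow_ne_zero 2 (hv0 u)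
        refine Continuous.sub (by fun_prop) (Continuous.mul (by fun_prop) ?_)
        exact Continuous.div (by fun_prop) cv hv0)
      (by simp only [pU, pX, pv])
    rw [← sub_zero (∫ u in (0:ℝ)..(2 * π), dot2 (Cu C t u) (W t u) / spd C t u)]
    refine (congrArg _ hH.symm).trans ?_
    rw [← intervalIntegral.integral_sub]
    · refine intervalIntegral.integral_congr fun u _ => ?_
      have hs := spd_sq C t u
      have h0 := hv0 u
      simp only [curv, nrm, dot2, Prod.smul_mk, smul_eq_mul]
      exact speed_identity h0 hs
    · refine Continuous.intervalIntegrable ?_ _ _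
      unfold dot2
      exact Continuous.div (by fun_prop) cv hv0
    · refine Continuous.intervalIntegrable ?_ _ _
      unfold dot2
      refine Continuous.div ?_ (by fun_prop) fun u => pow_ne_zero 2 (hv0 u)
      refine Continuous.sub (by fun_prop) (Continuous.mul (by fun_prop) ?_)
      exact Continuous.div (by fun_prop) cv hv0
  have har : HasDerivAt (ar0 C)
      (∫ u in (0:ℝ)..(2 * π), dot2 (Xf C t u) (nrm C t u) * spd C t u) t := by
    have h1 := (hasDerivAt_integral_strip
      (F := fun t u => (C t u).1 * (Cu C t u).2 - (C t u).2 * (Cu C t u).1)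
      (F' := fun t u => ((Xf C t u).1 * (Cu C t u).2 + (C t u).1 * (W t u).2) -
        ((Xf C t u).2 * (Cu C t u).1 + (C t u).2 * (W t u).1))
      ((hC1.mul hU2).sub (hC2.mul hU1))
      (((hX1.mul hU2).add (hC1.mul hW2)).sub ((hX2.mul hU1).add (hC2.mul hW1)))
      (fun t ht u => by
        have hu := hpart t ht u
        exact ((hasDerivAt_fst hu.1).mul (hasDerivAt_snd hu.2.2.2.1)).sub
          ((hasDerivAt_snd hu.1).mul (hasDerivAt_fst hu.2.2.2.1))) ht).const_mul (1 / 2)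
    refine h1.congr_deriv ?_
    have hH := integral_deriv_eq_zero
      (H := fun u => (C t u).1 * (Xf C t u).2 - (C t u).2 * (Xf C t u).1)
      (H' := fun u => ((Cu C t u).1 * (Xf C t u).2 + (C t u).1 * (W t u).2) -
        ((Cu C t u).2 * (Xf C t u).1 + (C t u).2 * (W t u).1))
      (fun u => by
        have hu := hpart t ht u
        exact ((hasDerivAt_fst hu.2.1).mul (hasDerivAt_snd hu.2.2.2.2)).sub
          ((hasDerivAt_snd hu.2.1).mul (hasDerivAt_fst hu.2.2.2.2)))
      (by fun_prop) (by simp only [pC, pX])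
    rw [← sub_zero (intervalIntegral _ _ _ _)]
    refine (congrArg (fun x => 1 / 2 * (_ - x)) hH.symm).trans ?_
    rw [← intervalIntegral.integral_sub, ← intervalIntegral.integral_const_mul]
    · refine intervalIntegral.integral_congr fun u _ => ?_
      have h0 := hv0 u
      simp only [nrm, dot2, Prod.smul_mk, smul_eq_mul]
      field_simp
      ring
    · exact Continuous.intervalIntegrable (by fun_prop) _ _
    · exact Continuous.intervalIntegrable (by fun_prop) _ _
  have hA : ar0 C t ≠ 0 := ar0_ne_zero (fun u => (hpart t ht u).2.1) cU (hclosed t ht) (hsimple t ht)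
    (hv t ht)
  have hP : per0 C t ≠ 0 :=
    (intervalIntegral.intervalIntegral_pos_of_pos (cv.intervalIntegrable _ _) (hv t ht)
      Real.two_pi_pos).ne'
  have cn : Continuous (nrm C t) := (cv.inv₀ hv0).smul (by fun_prop)
  have cc : Continuous (curv C t) :=
    Continuous.div (by fun_prop) (cv.pow 3) fun u => pow_ne_zero 3 (hv0 u)
  have hsplit : ∫ u in (0:ℝ)..(2 * π), dot2 (Xf C t u)
      ((curv C t u - 2 * per0 C t / ar0 C t) • nrm C t u) * spd C t u =
      (∫ u in (0:ℝ)..(2 * π), curv C t u * dot2 (Xf C t u) (nrm C t u) * spd C t u) -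
        2 * per0 C t / ar0 C t * ∫ u in (0:ℝ)..(2 * π), dot2 (Xf C t u) (nrm C t u) * spd C t u := by
    rw [← intervalIntegral.integral_const_mul, ← intervalIntegral.integral_sub]
    · refine intervalIntegral.integral_congr fun u _ => ?_
      simp only [dot2, Prod.smul_fst, Prod.smul_snd, smul_eq_mul]
      ring
    · unfold dot2
      exact Continuous.intervalIntegrable (by fun_prop) _ _
    · unfold dot2
      exact Continuous.intervalIntegrable (by fun_prop) _ _
  rw [hsplit]
  refine (hper.div (har.pow 2) (pow_ne_zero 2 hA)).congr_deriv ?_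
  simp only [Pi.pow_apply]
  field_simp
  ring

end
end

section
/- Let ρ : [0,T) × ℝ → (0,∞) be a smooth solution of the renormalized curvature flow PDE ∂_t ρ = ρ² ∂²_θ ρ + ρ²(ρ − 2h_t), 2π-periodic in θ and satisfying the closure conditions for every t. Then the ratio h_t = σ_t/λ_t satisfies dh_t/dt ≤ −12π²/(σ_t λ_t) ≤ 0 for all t ∈ [0,T); in particular h is non-increasing. -/
/-!
Write `u = 1/ρ` for the radius of curvature and `p` for the support function of the curve based at
the point `C(0)`, so that `p'' + p = u` and `2λ = ∫ p u`. The flow becomes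
`∂ₜ u = 2h − (∂²_θ ρ + ρ)`.

* Perimeter: `∂²_θ ρ` integrates to zero by periodicity, so `σ' = 4πh − ∫ ρ`
  (differentiation under the integral, `hasDerivWithinAt_integral`).
* Area: on closed curves `(u, v) ↦ ∫ p_u v` is symmetric (`integral_supp_mul_comm`), so
  `λ' = ∫ p ∂ₜu` (`hasDerivWithinAt_integral_supp_mul`). Integrating by parts twice gives
  `∫ p (∂²_θ ρ + ρ) = ∫ u ρ = 2π`, and `∫ p = σ`, so `λ' = 2hσ − 2π`.

Hence `h' = (6πσ − λ ∫ ρ − 2σ³/λ)/λ²`. Two inequalities finish the proof (`final_bound`):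
Cauchy–Schwarz `σ ∫ ρ ≥ 4π²` (`four_pi_sq_le`) and the isoperimetric inequality `σ² ≥ 4πλ`
(`isoperimetric`), the latter from `2λ = ∫ p² − ∫ (p')²` and Wirtinger's inequality for `p`,
which is Parseval's identity. Positivity of the area comes from `supp_pos`.

All derivatives in time are one-sided at `t = 0`, so they are taken within `Ico 0 T`.
-/

open Real Set Filter MeasureTheory Topology NNReal

/-- The perimeter of the strictly convex curve with curvature function `ρ`
in tangent-angle coordinates: `σ = ∫₀^{2π} dθ/ρ(θ)`. -/
noncomputable def perim (ρ : ℝ → ℝ) : ℝ := ∫ θ in (0:ℝ)..(2 * π), 1 / ρ θ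

/-- The curve associated to a curvature function `ρ` in tangent-angle coordinates:
`C(θ) = (∫₀^θ cos β/ρ(β) dβ, ∫₀^θ sin β/ρ(β) dβ)`. -/
noncomputable def curveP (ρ : ℝ → ℝ) (θ : ℝ) : ℝ × ℝ :=
  (∫ β in (0:ℝ)..θ, Real.cos β / ρ β, ∫ β in (0:ℝ)..θ, Real.sin β / ρ β)

/-- The enclosed area `λ = ½ ∫₀^{2π} ⟨C(θ), ν(θ)⟩/ρ(θ) dθ`, with outward normal
`ν(θ) = (sin θ, −cos θ)`. -/
noncomputable def encArea (ρ : ℝ → ℝ) : ℝ :=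
  (1 / 2) * ∫ θ in (0:ℝ)..(2 * π),
    ((curveP ρ θ).1 * Real.sin θ - (curveP ρ θ).2 * Real.cos θ) / ρ θ

/-- The ratio `h = σ/λ`. -/
noncomputable def hRatio (ρ : ℝ → ℝ) : ℝ := perim ρ / encArea ρ

/-- `ρ : [0,T) × ℝ → (0,∞)` is a smooth solution of the renormalized curvature flow PDE
`∂_t ρ = ρ² ∂²_θ ρ + ρ²(ρ − 2 h_t)`, `2π`-periodic in `θ` and satisfying the closure
conditions for every `t`. -/
def IsRCFSolution (T : ℝ) (ρ : ℝ → ℝ → ℝ) : Prop :=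
  ContDiffOn ℝ (⊤ : ℕ∞) (Function.uncurry ρ) (Ico 0 T ×ˢ (univ : Set ℝ)) ∧
  (∀ t ∈ Ico (0:ℝ) T, ∀ θ : ℝ, 0 < ρ t θ) ∧
  (∀ t ∈ Ico (0:ℝ) T, ∀ θ : ℝ, ρ t (θ + 2 * π) = ρ t θ) ∧
  (∀ t ∈ Ico (0:ℝ) T, (∫ θ in (0:ℝ)..(2 * π), Real.cos θ / ρ t θ) = 0) ∧
  (∀ t ∈ Ico (0:ℝ) T, (∫ θ in (0:ℝ)..(2 * π), Real.sin θ / ρ t θ) = 0) ∧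
  (∀ t ∈ Ico (0:ℝ) T, ∀ θ : ℝ,
    HasDerivWithinAt (fun s => ρ s θ)
      ((ρ t θ) ^ 2 * iteratedDeriv 2 (ρ t) θ + (ρ t θ) ^ 2 * (ρ t θ - 2 * hRatio (ρ t)))
      (Ico 0 T) t)

/-! ### Support function and area -/

/-- The support function `⟨C, ν⟩` of the curve with radius of curvature `v`, with the base point
`C(0)` as origin. It is linear in `v`, and `v` may have any sign. -/
noncomputable def supp (v : ℝ → ℝ) (θ : ℝ) : ℝ :=
  (∫ β in (0:ℝ)..θ, Real.cos β * v β) * Real.sin θ -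
    (∫ β in (0:ℝ)..θ, Real.sin β * v β) * Real.cos θ

/-- The component of the position vector `C(θ)` along the unit tangent `(cos θ, sin θ)`; it is
the derivative of `supp v`. -/
noncomputable def tang (v : ℝ → ℝ) (θ : ℝ) : ℝ :=
  (∫ β in (0:ℝ)..θ, Real.cos β * v β) * Real.cos θ +
    (∫ β in (0:ℝ)..θ, Real.sin β * v β) * Real.sin θ

/-- The closure condition for the radius of curvature `v`. -/
def Closes (v : ℝ → ℝ) : Prop :=
  (∫ β in (0:ℝ)..(2 * π), Real.cos β * v β) = 0 ∧ (∫ β in (0:ℝ)..(2 * π), Real.sin β * v β) = 0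

lemma hasDerivAt_supp {v : ℝ → ℝ} (hv : Continuous v) (θ : ℝ) :
    HasDerivAt (supp v) (tang v θ) θ := by
  have hc : Continuous fun β => Real.cos β * v β := by fun_prop
  have hs : Continuous fun β => Real.sin β * v β := by fun_prop
  have h1 := (hc.integral_hasStrictDerivAt 0 θ).hasDerivAt.mul (Real.hasDerivAt_sin θ)
  have h2 := (hs.integral_hasStrictDerivAt 0 θ).hasDerivAt.mul (Real.hasDerivAt_cos θ)
  refine (h1.sub h2).congr_deriv ?_
  simp only [tang]; ring

/-- Together with `hasDerivAt_supp`, this is the equation `p'' + p = v` for the support function. -/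
lemma hasDerivAt_tang {v : ℝ → ℝ} (hv : Continuous v) (θ : ℝ) :
    HasDerivAt (tang v) (v θ - supp v θ) θ := by
  have hc : Continuous fun β => Real.cos β * v β := by fun_prop
  have hs : Continuous fun β => Real.sin β * v β := by fun_prop
  have h1 := (hc.integral_hasStrictDerivAt 0 θ).hasDerivAt.mul (Real.hasDerivAt_cos θ)
  have h2 := (hs.integral_hasStrictDerivAt 0 θ).hasDerivAt.mul (Real.hasDerivAt_sin θ)
  refine (h1.add h2).congr_deriv ?_
  simp only [supp]
  linear_combination (v θ) * Real.sin_sq_add_cos_sq θ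

lemma continuous_supp {v : ℝ → ℝ} (hv : Continuous v) : Continuous (supp v) :=
  continuous_iff_continuousAt.2 fun θ => (hasDerivAt_supp hv θ).continuousAt

lemma continuous_tang {v : ℝ → ℝ} (hv : Continuous v) : Continuous (tang v) :=
  continuous_iff_continuousAt.2 fun θ => (hasDerivAt_tang hv θ).continuousAt

lemma supp_zero (v : ℝ → ℝ) : supp v 0 = 0 := by simp [supp]

lemma tang_zero (v : ℝ → ℝ) : tang v 0 = 0 := by simp [tang]

lemma supp_two_pi {v : ℝ → ℝ} (h : Closes v) : supp v (2 * π) = 0 := by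
  simp [supp, h.1, h.2]

lemma tang_two_pi {v : ℝ → ℝ} (h : Closes v) : tang v (2 * π) = 0 := by
  simp [tang, h.1, h.2]

lemma supp_add {v w : ℝ → ℝ} (hv : Continuous v) (hw : Continuous w) (θ : ℝ) :
    supp (fun x => v x + w x) θ = supp v θ + supp w θ := by
  have e (f : ℝ → ℝ) (hf : Continuous f) : (∫ β in (0:ℝ)..θ, f β * (v β + w β)) =
      (∫ β in (0:ℝ)..θ, f β * v β) + ∫ β in (0:ℝ)..θ, f β * w β := by
    simp only [mul_add]
    exact intervalIntegral.integral_add ((hf.mul hv).intervalIntegrable _ _)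
      ((hf.mul hw).intervalIntegrable _ _)
  simp only [supp]
  rw [e _ Real.continuous_cos, e _ Real.continuous_sin]; ring

/-- Integral form of the support function. Its kernel is positive when `θ ≤ π`; for `θ ≥ π` the
formula `supp_eq_integral'`, which starts from the other end of the period, is used. -/
lemma supp_eq_integral {v : ℝ → ℝ} (hv : Continuous v) (θ : ℝ) :
    supp v θ = ∫ β in (0:ℝ)..θ, Real.sin (θ - β) * v β := by
  have hc : Continuous fun β => Real.cos β * v β := by fun_prop
  have hs : Continuous fun β => Real.sin β * v β := by fun_prop
  rw [supp, ← intervalIntegral.integral_mul_const, ← intervalIntegral.integral_mul_const,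
    ← intervalIntegral.integral_sub]
  · refine intervalIntegral.integral_congr fun β _ => ?_
    simp only [Real.sin_sub]; ring
  · exact (hc.mul continuous_const).intervalIntegrable _ _
  · exact (hs.mul continuous_const).intervalIntegrable _ _

lemma supp_eq_integral' {v : ℝ → ℝ} (hv : Continuous v) (h : Closes v) (θ : ℝ) :
    supp v θ = ∫ β in θ..(2 * π), Real.sin (β - θ) * v β := by
  have hz : (∫ β in (0:ℝ)..(2 * π), Real.sin (θ - β) * v β) = 0 := by
    have e : (∫ β in (0:ℝ)..(2 * π), Real.sin (θ - β) * v β) =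
        Real.sin θ * (∫ β in (0:ℝ)..(2 * π), Real.cos β * v β) -
          Real.cos θ * ∫ β in (0:ℝ)..(2 * π), Real.sin β * v β := by
      rw [← intervalIntegral.integral_const_mul, ← intervalIntegral.integral_const_mul,
        ← intervalIntegral.integral_sub]
      · refine intervalIntegral.integral_congr fun β _ => ?_
        simp only [Real.sin_sub]; ring
      · exact Continuous.intervalIntegrable (by fun_prop) _ _
      · exact Continuous.intervalIntegrable (by fun_prop) _ _
    rw [e, h.1, h.2]; ring
  have hi (a b : ℝ) : IntervalIntegrable (fun β => Real.sin (θ - β) * v β) volume a b :=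
    Continuous.intervalIntegrable (by fun_prop) _ _
  rw [← intervalIntegral.integral_add_adjacent_intervals (hi 0 θ) (hi θ (2 * π)),
    ← supp_eq_integral hv] at hz
  rw [eq_neg_of_add_eq_zero_left hz, ← intervalIntegral.integral_neg]
  refine intervalIntegral.integral_congr fun β _ => ?_
  simp only [← neg_sub θ β, Real.sin_neg]; ring

lemma supp_pos {v : ℝ → ℝ} (hv : Continuous v) (h : Closes v) (hpos : ∀ θ, 0 < v θ)
    {θ : ℝ} (hθ : θ ∈ Ioo 0 (2 * π)) : 0 < supp v θ := by
  obtain ⟨h0, h1⟩ := hθ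
  rcases le_total θ π with hp | hp
  · rw [supp_eq_integral hv]
    refine intervalIntegral.intervalIntegral_pos_of_pos_on
      (Continuous.intervalIntegrable (by fun_prop) _ _) (fun x hx => ?_) h0
    exact mul_pos (Real.sin_pos_of_pos_of_lt_pi (by linarith [hx.2]) (by linarith [hx.1])) (hpos x)
  · rw [supp_eq_integral' hv h]
    refine intervalIntegral.intervalIntegral_pos_of_pos_on
      (Continuous.intervalIntegrable (by fun_prop) _ _) (fun x hx => ?_) h1
    exact mul_pos (Real.sin_pos_of_pos_of_lt_pi (by linarith [hx.1]) (by linarith [hx.2])) (hpos x)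

lemma integral_supp_mul_pos {v : ℝ → ℝ} (hv : Continuous v) (h : Closes v) (hpos : ∀ θ, 0 < v θ) :
    0 < ∫ θ in (0:ℝ)..(2 * π), supp v θ * v θ :=
  intervalIntegral.intervalIntegral_pos_of_pos_on
    (((continuous_supp hv).mul hv).intervalIntegrable _ _)
    (fun x hx => mul_pos (supp_pos hv h hpos hx) (hpos x)) (by positivity)

lemma integral_supp {v : ℝ → ℝ} (hv : Continuous v) (h : Closes v) :
    (∫ θ in (0:ℝ)..(2 * π), supp v θ) = ∫ θ in (0:ℝ)..(2 * π), v θ := by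
  have hs := continuous_supp hv
  have := intervalIntegral.integral_eq_sub_of_hasDerivAt (a := 0) (b := 2 * π)
    (fun θ _ => hasDerivAt_tang hv θ) ((hv.sub hs).intervalIntegrable _ _)
  rw [intervalIntegral.integral_sub (hv.intervalIntegrable _ _) (hs.intervalIntegrable _ _),
    tang_two_pi h, tang_zero] at this
  linarith

/-- The mixed area of closed curves is symmetric: the Wronskian-type expression
`p_v p_w' − p_w p_v'` vanishes at both ends of the period and has derivative `p_v w − p_w v`. -/
lemma integral_supp_mul_comm {v w : ℝ → ℝ} (hv : Continuous v) (hw : Continuous w)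
    (h : Closes v) (h' : Closes w) :
    (∫ θ in (0:ℝ)..(2 * π), supp v θ * w θ) = ∫ θ in (0:ℝ)..(2 * π), supp w θ * v θ := by
  have hs := continuous_supp hv
  have hs' := continuous_supp hw
  have hd : ∀ θ ∈ uIcc 0 (2 * π), HasDerivAt (fun θ => supp v θ * tang w θ - supp w θ * tang v θ)
      (supp v θ * w θ - supp w θ * v θ) θ := fun θ _ => by
    refine (((hasDerivAt_supp hv θ).mul (hasDerivAt_tang hw θ)).sub
      ((hasDerivAt_supp hw θ).mul (hasDerivAt_tang hv θ))).congr_deriv ?_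
    ring
  have := intervalIntegral.integral_eq_sub_of_hasDerivAt hd
    (((hs.mul hw).sub (hs'.mul hv)).intervalIntegrable _ _)
  rw [intervalIntegral.integral_sub (Continuous.intervalIntegrable (by fun_prop) _ _)
    (Continuous.intervalIntegrable (by fun_prop) _ _), supp_two_pi h, supp_two_pi h', supp_zero,
    supp_zero] at this
  linarith

/-- Twice the area is `∫ p² − ∫ (p')²`. -/
lemma integral_supp_mul_self {v : ℝ → ℝ} (hv : Continuous v) (h : Closes v) :
    (∫ θ in (0:ℝ)..(2 * π), supp v θ * v θ) =
      (∫ θ in (0:ℝ)..(2 * π), supp v θ ^ 2) - ∫ θ in (0:ℝ)..(2 * π), tang v θ ^ 2 := by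
  have hs := continuous_supp hv
  have ht := continuous_tang hv
  have hd : ∀ θ ∈ uIcc 0 (2 * π), HasDerivAt (fun θ => supp v θ * tang v θ)
      (tang v θ ^ 2 + (supp v θ * v θ - supp v θ ^ 2)) θ := fun θ _ => by
    refine ((hasDerivAt_supp hv θ).mul (hasDerivAt_tang hv θ)).congr_deriv ?_
    ring
  have := intervalIntegral.integral_eq_sub_of_hasDerivAt hd
    (Continuous.intervalIntegrable (by fun_prop) _ _)
  rw [intervalIntegral.integral_add (Continuous.intervalIntegrable (by fun_prop) _ _)
    (Continuous.intervalIntegrable (by fun_prop) _ _),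
    intervalIntegral.integral_sub (Continuous.intervalIntegrable (by fun_prop) _ _)
    (Continuous.intervalIntegrable (by fun_prop) _ _), supp_two_pi h, supp_zero] at this
  linarith

/-- Two integrations by parts; since `p` and its derivative vanish at both ends of the period, no
periodicity of `r` is involved. -/
lemma integral_supp_mul_second_deriv {v r r' r'' : ℝ → ℝ} (hv : Continuous v) (h : Closes v)
    (hr : ∀ θ, HasDerivAt r (r' θ) θ) (hr' : ∀ θ, HasDerivAt r' (r'' θ) θ)
    (hr'' : Continuous r'') :
    (∫ θ in (0:ℝ)..(2 * π), supp v θ * (r'' θ + r θ)) = ∫ θ in (0:ℝ)..(2 * π), v θ * r θ := by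
  have hs := continuous_supp hv
  have hrc : Continuous r := continuous_iff_continuousAt.2 fun θ => (hr θ).continuousAt
  have hd : ∀ θ ∈ uIcc 0 (2 * π), HasDerivAt (fun θ => supp v θ * r' θ - tang v θ * r θ)
      (supp v θ * (r'' θ + r θ) - v θ * r θ) θ := fun θ _ => by
    refine (((hasDerivAt_supp hv θ).mul (hr' θ)).sub
      ((hasDerivAt_tang hv θ).mul (hr θ))).congr_deriv ?_
    ring
  have := intervalIntegral.integral_eq_sub_of_hasDerivAt hd
    (Continuous.intervalIntegrable (by fun_prop) _ _)
  rw [intervalIntegral.integral_sub (Continuous.intervalIntegrable (by fun_prop) _ _)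
    (Continuous.intervalIntegrable (by fun_prop) _ _), supp_two_pi h, supp_zero, tang_two_pi h,
    tang_zero] at this
  linarith

lemma abs_supp_le {v : ℝ → ℝ} {M : ℝ} (hM : ∀ θ ∈ Icc 0 (2 * π), |v θ| ≤ M) {θ : ℝ}
    (hθ : θ ∈ Icc 0 (2 * π)) : |supp v θ| ≤ 4 * π * M := by
  have hM0 : 0 ≤ M := (abs_nonneg _).trans (hM θ hθ)
  have key (f : ℝ → ℝ) (hf : ∀ x, |f x| ≤ 1) : |∫ β in (0:ℝ)..θ, f β * v β| ≤ M * (2 * π) := by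
    have := intervalIntegral.norm_integral_le_of_norm_le_const (a := 0) (b := θ) (C := M)
      (f := fun β => f β * v β) fun x hx => by
        rw [uIoc_of_le hθ.1] at hx
        rw [Real.norm_eq_abs, abs_mul]
        have := hM x ⟨hx.1.le, hx.2.trans hθ.2⟩
        nlinarith [hf x, abs_nonneg (v x), abs_nonneg (f x)]
    rw [Real.norm_eq_abs, sub_zero, abs_of_nonneg hθ.1] at this
    exact this.trans (mul_le_mul_of_nonneg_left hθ.2 hM0)
  have hc := key Real.cos Real.abs_cos_le_one
  have hs := key Real.sin Real.abs_sin_le_one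
  refine (abs_sub _ _).trans ?_
  rw [abs_mul, abs_mul]
  have h1 := mul_le_mul hc (Real.abs_sin_le_one θ) (abs_nonneg _) (by positivity)
  have h2 := mul_le_mul hs (Real.abs_cos_le_one θ) (abs_nonneg _) (by positivity)
  linarith

/-! ### Isoperimetric inequality -/

/-- Wirtinger's inequality: the variance of a periodic function is at most `∫ (f')²`. By Parseval
it reduces to `|c_n(f)| ≤ |n| |c_n(f)| = |c_n(f')|` for `n ≠ 0`, while `c_0(f)` is the mean. -/
lemma wirtinger {f f' : ℝ → ℝ} (hf : ∀ θ, HasDerivAt f (f' θ) θ) (hf' : Continuous f')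
    (hper : f 0 = f (2 * π)) :
    (∫ θ in (0:ℝ)..(2 * π), f θ ^ 2) - (∫ θ in (0:ℝ)..(2 * π), f' θ ^ 2) ≤
      (∫ θ in (0:ℝ)..(2 * π), f θ) ^ 2 / (2 * π) := by
  have hfc : Continuous f := continuous_iff_continuousAt.2 fun θ => (hf θ).continuousAt
  have hab : (0:ℝ) < 2 * π := by positivity
  have parseval (g : ℝ → ℝ) (hg : Continuous g) :
      HasSum (fun i => ‖fourierCoeffOn hab (fun x => (g x : ℂ)) i‖ ^ 2)
        ((2 * π)⁻¹ * ∫ x in (0:ℝ)..(2 * π), g x ^ 2) := by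
    have hgc : Continuous fun x => (g x : ℂ) := Complex.continuous_ofReal.comp hg
    have hL : MemLp (fun x => (g x : ℂ)) 2 (volume.restrict (Ioc 0 (2 * π))) := by
      obtain ⟨C, hC⟩ := isCompact_Icc.exists_bound_of_continuousOn
        (hgc.continuousOn (s := Icc 0 (2 * π)))
      refine MemLp.of_bound hgc.aestronglyMeasurable C ?_
      filter_upwards [ae_restrict_mem measurableSet_Ioc] with x hx
      exact hC x (Ioc_subset_Icc_self hx)
    have := hasSum_sq_fourierCoeffOn hab hL
    simpa using this
  have H := parseval f hfc
  have H' := parseval f' hf'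
  set c := fun i : ℤ => ‖fourierCoeffOn hab (fun x => (f x : ℂ)) i‖ ^ 2 with hc
  set c' := fun i : ℤ => ‖fourierCoeffOn hab (fun x => (f' x : ℂ)) i‖ ^ 2 with hc'
  have hle : ∀ n : ℤ, n ≠ 0 → c n ≤ c' n := by
    intro n hn
    have := fourierCoeffOn_of_hasDerivAt hab hn (f := fun x => (f x : ℂ))
      (f' := fun x => (f' x : ℂ)) (fun x _ => (hf x).ofReal_comp)
      ((Complex.continuous_ofReal.comp hf').intervalIntegrable _ _)
    simp only [hc, hc']
    rw [this, hper]
    have hn1 : (1:ℝ) ≤ |(n:ℝ)| := by exact_mod_cast Int.one_le_abs hn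
    simp only [sub_self, mul_zero, zero_sub, Complex.ofReal_zero, sub_zero, norm_mul, norm_neg,
      norm_div, norm_one, Complex.norm_real, Complex.norm_I, Complex.norm_intCast,
      Complex.ofReal_mul, Complex.ofReal_ofNat, Complex.norm_ofNat, Real.norm_eq_abs,
      abs_of_pos Real.pi_pos, mul_one]
    gcongr
    have : 1 / (2 * π * |(n:ℝ)|) * (2 * π * ‖fourierCoeffOn hab (fun x => (f' x : ℂ)) n‖)
        = ‖fourierCoeffOn hab (fun x => (f' x : ℂ)) n‖ / |(n:ℝ)| := by
      field_simp
    rw [this]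
    exact div_le_self (norm_nonneg _) hn1
  have h0 : c 0 = ((2 * π)⁻¹ * ∫ θ in (0:ℝ)..(2 * π), f θ) ^ 2 := by
    simp only [hc]
    rw [fourierCoeffOn_eq_integral]
    simp only [neg_zero, fourier_zero, one_smul, intervalIntegral.integral_ofReal, norm_smul,
      Complex.norm_real, Real.norm_eq_abs, mul_pow, sq_abs, sub_zero, one_div]
  have hsum : (2 * π)⁻¹ * (∫ x in (0:ℝ)..(2 * π), f x ^ 2) ≤
      c 0 + (2 * π)⁻¹ * ∫ x in (0:ℝ)..(2 * π), f' x ^ 2 := by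
    refine hasSum_le (fun n => ?_) H ((hasSum_ite_eq 0 (c 0)).add H')
    by_cases hn : n = 0
    · subst hn; simp [c']
    · simpa [hn] using hle n hn
  rw [h0] at hsum
  have h2 := mul_le_mul_of_nonneg_left hsum hab.le
  field_simp at h2 ⊢
  linarith

/-- The isoperimetric inequality `2λ ≤ σ²/(2π)`, as Wirtinger's inequality for the support
function. -/
lemma isoperimetric {v : ℝ → ℝ} (hv : Continuous v) (h : Closes v) :
    (∫ θ in (0:ℝ)..(2 * π), supp v θ * v θ) ≤ (∫ θ in (0:ℝ)..(2 * π), v θ) ^ 2 / (2 * π) := by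
  rw [integral_supp_mul_self hv h, ← integral_supp hv h]
  exact wirtinger (hasDerivAt_supp hv) (continuous_tang hv) (by rw [supp_zero, supp_two_pi h])

/-- Cauchy–Schwarz for the curvature and the radius of curvature, obtained by integrating
`a² r + 1/r ≥ 2a` with the optimal constant `a`. -/
lemma four_pi_sq_le {r : ℝ → ℝ} (hr : Continuous r) (hpos : ∀ θ, 0 < r θ) :
    4 * π ^ 2 ≤ (∫ θ in (0:ℝ)..(2 * π), r θ) * ∫ θ in (0:ℝ)..(2 * π), 1 / r θ := by
  have hi : Continuous fun θ => 1 / r θ := continuous_const.div hr fun θ => (hpos θ).ne'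
  set σ := ∫ θ in (0:ℝ)..(2 * π), 1 / r θ with hσ
  have hσp : 0 < σ := intervalIntegral.intervalIntegral_pos_of_pos_on
    (hi.intervalIntegrable _ _) (fun x _ => one_div_pos.2 (hpos x)) (by positivity)
  set a := σ / (2 * π) with ha
  have hap : 0 < a := by positivity
  have h1 : (∫ θ in (0:ℝ)..(2 * π), 2 * a) ≤ ∫ θ in (0:ℝ)..(2 * π), (a ^ 2 * r θ + 1 / r θ) := by
    refine intervalIntegral.integral_mono (by positivity)
      (continuous_const.intervalIntegrable _ _)
      (Continuous.intervalIntegrable (by fun_prop) _ _) fun θ => ?_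
    have := hpos θ
    simp only
    rw [← sub_nonneg]
    have : a ^ 2 * r θ + 1 / r θ - 2 * a = (a * r θ - 1) ^ 2 / r θ := by field_simp; ring
    rw [this]; positivity
  rw [intervalIntegral.integral_add (Continuous.intervalIntegrable (by fun_prop) _ _)
    (hi.intervalIntegrable _ _), intervalIntegral.integral_const,
    intervalIntegral.integral_const_mul, ← hσ, smul_eq_mul, sub_zero] at h1
  have e : 2 * π * (2 * a) = 2 * σ := by rw [ha]; field_simp
  have h2 : σ ≤ a ^ 2 * ∫ θ in (0:ℝ)..(2 * π), r θ := by linarith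
  rw [ha, div_pow, div_mul_eq_mul_div, le_div_iff₀ (by positivity)] at h2
  have h3 : σ * (4 * π ^ 2) ≤ σ * ((∫ θ in (0:ℝ)..(2 * π), r θ) * σ) := by linarith
  exact le_of_mul_le_mul_left h3 hσp
/-! ### Differentiation under the integral sign -/

/-- If the time derivative `g` of `f` is jointly continuous, then `f` is Lipschitz in time near
`t`, uniformly in `θ` on a compact interval. -/
lemma exists_lipschitz {T t b : ℝ} (ht : t ∈ Ico 0 T) {f g : ℝ → ℝ → ℝ}
    (hf : ∀ s ∈ Ico 0 T, ∀ θ, HasDerivWithinAt (fun s => f s θ) (g s θ) (Ico 0 T) s)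
    (hg : ContinuousOn (Function.uncurry g) (Ico 0 T ×ˢ univ)) :
    ∃ K, ∀ᶠ s in 𝓝[Ico 0 T] t, ∀ θ ∈ Icc 0 b, |f s θ - f t θ| ≤ K * |s - t| := by
  obtain ⟨T', hT', hT'T⟩ := exists_between ht.2
  have hsub : Icc 0 T' ⊆ Ico 0 T := fun s hs => ⟨hs.1, hs.2.trans_lt hT'T⟩
  obtain ⟨K, hK⟩ := (isCompact_Icc.prod isCompact_Icc).exists_bound_of_continuousOn
    (hg.mono (prod_mono hsub (subset_univ (Icc 0 b))))
  refine ⟨K, ?_⟩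
  filter_upwards [self_mem_nhdsWithin, mem_nhdsWithin_of_mem_nhds (Iio_mem_nhds hT')]
    with s hs hsT' θ hθ
  exact (convex_Icc 0 T').norm_image_sub_le_of_norm_hasDerivWithin_le
    (fun x hx => (hf x (hsub hx) θ).mono hsub) (fun x hx => hK (x, θ) ⟨hx, hθ⟩)
    ⟨ht.1, hT'.le⟩ ⟨hs.1, le_of_lt hsT'⟩

/-- One-sided version of differentiation under the integral: dominated convergence for the
difference quotients, which `exists_lipschitz` bounds. -/
lemma hasDerivWithinAt_integral {T t b : ℝ} (hb : 0 ≤ b) (ht : t ∈ Ico 0 T) {f g : ℝ → ℝ → ℝ}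
    (hf : ∀ s ∈ Ico 0 T, ∀ θ, HasDerivWithinAt (fun s => f s θ) (g s θ) (Ico 0 T) s)
    (hg : ContinuousOn (Function.uncurry g) (Ico 0 T ×ˢ univ))
    (hfc : ∀ s ∈ Ico 0 T, Continuous (f s)) :
    HasDerivWithinAt (fun s => ∫ θ in (0:ℝ)..b, f s θ) (∫ θ in (0:ℝ)..b, g t θ) (Ico 0 T) t := by
  obtain ⟨K, hK⟩ := exists_lipschitz (b := b) ht hf hg
  rw [hasDerivWithinAt_iff_tendsto_slope]
  have hmono : 𝓝[Ico 0 T \ {t}] t ≤ 𝓝[Ico 0 T] t := nhdsWithin_mono _ sdiff_subset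
  have hlim : Tendsto (fun s => ∫ θ in (0:ℝ)..b, slope (fun s => f s θ) t s)
      (𝓝[Ico 0 T \ {t}] t) (𝓝 (∫ θ in (0:ℝ)..b, g t θ)) := by
    refine intervalIntegral.tendsto_integral_filter_of_dominated_convergence (fun _ => K) ?_ ?_
      (by simp) ?_
    · filter_upwards [self_mem_nhdsWithin] with s hs
      simp only [slope_def_field]
      exact (((hfc s hs.1).sub (hfc t ht)).div_const _).aestronglyMeasurable
    · filter_upwards [self_mem_nhdsWithin, hmono hK] with s hs hKs
      refine Eventually.of_forall fun θ hθ => ?_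
      rw [uIoc_of_le hb] at hθ
      rw [slope_def_field, norm_div, Real.norm_eq_abs, Real.norm_eq_abs, div_le_iff₀]
      · exact hKs θ (Ioc_subset_Icc_self hθ)
      · exact abs_pos.2 (sub_ne_zero.2 hs.2)
    · exact Eventually.of_forall fun θ _ => hasDerivWithinAt_iff_tendsto_slope.1 (hf t ht θ)
  refine hlim.congr' ?_
  filter_upwards [self_mem_nhdsWithin] with s hs
  simp only [slope_def_field]
  rw [intervalIntegral.integral_div, intervalIntegral.integral_sub
    ((hfc s hs.1).intervalIntegrable _ _) ((hfc t ht).intervalIntegrable _ _)]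

/-- First variation of (twice) the area. By symmetry the quadratic form at `u s` equals its value
at `u t`, plus twice its polar form at `u t` and `u s − u t`, plus its value at `u s − u t`; this
last remainder is `O((s − t)²)`. -/
lemma hasDerivWithinAt_integral_supp_mul {T t : ℝ} (ht : t ∈ Ico 0 T) {u g : ℝ → ℝ → ℝ}
    (hu : ∀ s ∈ Ico 0 T, ∀ θ, HasDerivWithinAt (fun s => u s θ) (g s θ) (Ico 0 T) s)
    (hg : ContinuousOn (Function.uncurry g) (Ico 0 T ×ˢ univ))
    (huc : ∀ s ∈ Ico 0 T, Continuous (u s)) (hcl : ∀ s ∈ Ico 0 T, Closes (u s)) :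
    HasDerivWithinAt (fun s => ∫ θ in (0:ℝ)..(2 * π), supp (u s) θ * u s θ)
      (2 * ∫ θ in (0:ℝ)..(2 * π), supp (u t) θ * g t θ) (Ico 0 T) t := by
  have hsc := continuous_supp (huc t ht)
  set R : ℝ → ℝ := fun s => ∫ θ in (0:ℝ)..(2 * π),
    supp (fun θ => u s θ - u t θ) θ * (u s θ - u t θ) with hR
  have hlin : HasDerivWithinAt (fun s => ∫ θ in (0:ℝ)..(2 * π), supp (u t) θ * u s θ)
      (∫ θ in (0:ℝ)..(2 * π), supp (u t) θ * g t θ) (Ico 0 T) t := by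
    refine hasDerivWithinAt_integral (f := fun s θ => supp (u t) θ * u s θ)
      (g := fun s θ => supp (u t) θ * g s θ) (by positivity) ht
      (fun s hs θ => (hu s hs θ).const_mul _) ?_ fun s hs => hsc.mul (huc s hs)
    exact ((hsc.comp continuous_snd).continuousOn).mul hg
  have hexp : ∀ s ∈ Ico 0 T, (∫ θ in (0:ℝ)..(2 * π), supp (u s) θ * u s θ) =
      2 * (∫ θ in (0:ℝ)..(2 * π), supp (u t) θ * u s θ) -
        (∫ θ in (0:ℝ)..(2 * π), supp (u t) θ * u t θ) + R s := by
    intro s hs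
    have hs' := huc s hs
    have ht' := huc t ht
    have hss := continuous_supp hs'
    have hd : Continuous fun θ => u s θ - u t θ := hs'.sub ht'
    have e (θ : ℝ) : supp (fun θ => u s θ - u t θ) θ = supp (u s) θ - supp (u t) θ := by
      have := supp_add hd ht' θ
      simp only [sub_add_cancel] at this
      linarith
    have hi {f : ℝ → ℝ} (hf : Continuous f) : IntervalIntegrable f volume 0 (2 * π) :=
      hf.intervalIntegrable _ _
    have hR' : R s = (∫ θ in (0:ℝ)..(2 * π), supp (u s) θ * u s θ) -
        (∫ θ in (0:ℝ)..(2 * π), supp (u t) θ * u s θ) -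
        ((∫ θ in (0:ℝ)..(2 * π), supp (u s) θ * u t θ) -
          ∫ θ in (0:ℝ)..(2 * π), supp (u t) θ * u t θ) := by
      rw [← intervalIntegral.integral_sub (hi (by fun_prop)) (hi (by fun_prop)),
        ← intervalIntegral.integral_sub (hi (by fun_prop)) (hi (by fun_prop)),
        ← intervalIntegral.integral_sub (hi (by fun_prop)) (hi (by fun_prop))]
      refine intervalIntegral.integral_congr fun θ _ => ?_
      simp only [e]; ring
    rw [hR', integral_supp_mul_comm hs' ht' (hcl s hs) (hcl t ht)]
    ring
  have hR0 : R t = 0 := by simp [hR]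
  have hRd : HasDerivWithinAt R 0 (Ico 0 T) t := by
    obtain ⟨K, hK⟩ := exists_lipschitz (b := 2 * π) ht hu hg
    rw [hasDerivWithinAt_iff_isLittleO]
    have hO : (fun s => R s - R t - (s - t) • (0:ℝ)) =O[𝓝[Ico 0 T] t] fun s => (s - t) ^ 2 := by
      refine Asymptotics.IsBigO.of_bound (4 * π * K * K * (2 * π)) ?_
      filter_upwards [hK] with s hs
      have := intervalIntegral.norm_integral_le_of_norm_le_const (a := 0) (b := 2 * π)
        (C := 4 * π * (K * |s - t|) * (K * |s - t|))
        (f := fun θ => supp (fun θ => u s θ - u t θ) θ * (u s θ - u t θ)) fun θ hθ => by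
          rw [uIoc_of_le (by positivity)] at hθ
          have hθ' := Ioc_subset_Icc_self hθ
          rw [norm_mul]
          exact mul_le_mul (abs_supp_le hs hθ') (hs θ hθ') (abs_nonneg _)
            ((abs_nonneg _).trans (abs_supp_le hs hθ'))
      rw [hR0, smul_zero, sub_zero, sub_zero, norm_pow, Real.norm_eq_abs (s - t)]
      refine this.trans (le_of_eq ?_)
      rw [sub_zero, abs_of_pos (show (0:ℝ) < 2 * π by positivity)]
      ring
    refine hO.trans_isLittleO ?_
    have : (fun s : ℝ => (s - t) ^ 2) =o[𝓝 t] fun s => s - t := by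
      have h1 := (Asymptotics.isLittleO_pow_id (𝕜 := ℝ) (n := 2) (by norm_num)).comp_tendsto
        (show Tendsto (fun s => s - t) (𝓝 t) (𝓝 0) from by
          simpa using (continuous_sub_right t).tendsto t)
      exact h1
    exact this.mono nhdsWithin_le_nhds
  have := ((hlin.const_mul 2).sub_const (∫ θ in (0:ℝ)..(2 * π), supp (u t) θ * u t θ)).add hRd
  rw [add_zero] at this
  exact this.congr hexp (hexp t ht)

/-- The area as a quadratic form in the radius of curvature. -/
lemma encArea_eq (r : ℝ → ℝ) : encArea r =
    (1 / 2) * ∫ θ in (0:ℝ)..(2 * π), supp (fun θ => 1 / r θ) θ * (1 / r θ) := by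
  simp only [encArea, curveP, supp, div_eq_mul_inv, one_mul]

/-! ### The flow -/

/-- With `l` the area and `k` the integral of the curvature, the left side is the quotient-rule
expression for the derivative of `σ/l`. -/
lemma final_bound {σ l k : ℝ} (hσ : 0 < σ) (hl : 0 < l) (hiso : 4 * π * l ≤ σ ^ 2)
    (hk : 4 * π ^ 2 ≤ k * σ) :
    ((4 * π * (σ / l) - k) * l - σ * (2 * (σ / l) * σ - 2 * π)) / l ^ 2 ≤
      -(12 * π ^ 2) / (σ * l) := by
  have hπ := Real.pi_pos
  rw [div_le_div_iff₀ (by positivity) (by positivity)]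
  have e : ((4 * π * (σ / l) - k) * l - σ * (2 * (σ / l) * σ - 2 * π)) * (σ * l) =
      6 * π * σ ^ 2 * l - k * σ * l ^ 2 - 2 * (σ ^ 2) ^ 2 := by
    field_simp; ring
  rw [e]
  -- Once `k * σ` is replaced by its lower bound, the defect is `2 * x ^ 2 + 10 * π * l * x`
  -- with `x = σ ^ 2 - 4 * π * l ≥ 0`.
  nlinarith [mul_le_mul_of_nonneg_right hk (sq_nonneg l), sq_nonneg (σ ^ 2 - 4 * π * l),
    mul_nonneg (mul_pos hπ hl).le (sub_nonneg.2 hiso)]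

/-- Along the renormalized curvature flow, the ratio `h_t = σ_t/λ_t`
satisfies `dh/dt ≤ −12π²/(σ_t λ_t) ≤ 0`; in particular `h` is non-increasing. -/
theorem stmt3 (T : ℝ) (ρ : ℝ → ℝ → ℝ) (hρ : IsRCFSolution T ρ) :
    (∀ t ∈ Ico (0:ℝ) T, ∃ d : ℝ,
      HasDerivWithinAt (fun s => hRatio (ρ s)) d (Ico 0 T) t ∧
      d ≤ -(12 * π ^ 2) / (perim (ρ t) * encArea (ρ t)) ∧
      -(12 * π ^ 2) / (perim (ρ t) * encArea (ρ t)) ≤ 0) ∧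
    AntitoneOn (fun t => hRatio (ρ t)) (Ico 0 T) := by
  obtain ⟨hsm, hpos, hper, hcos, hsin, hpde⟩ := hρ
  have hslice : ∀ t ∈ Ico 0 T, ContDiff ℝ (⊤ : ℕ∞) (ρ t) := fun t ht => by
    have : ContDiffOn ℝ (⊤ : ℕ∞) (Function.uncurry ρ ∘ fun θ : ℝ => (t, θ)) univ :=
      hsm.comp (contDiff_const.prodMk contDiff_id).contDiffOn fun θ _ => ⟨ht, mem_univ _⟩
    exact contDiffOn_univ.1 this
  set D : ℝ → ℝ → ℝ := fun t θ =>
    (ρ t θ) ^ 2 * iteratedDeriv 2 (ρ t) θ + (ρ t θ) ^ 2 * (ρ t θ - 2 * hRatio (ρ t)) with hD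
  -- The time derivative is a partial derivative of the jointly smooth `ρ`, hence is jointly
  -- continuous; this needs no prior information on the continuity of `h`.
  have hDc : ContinuousOn (Function.uncurry D) (Ico 0 T ×ˢ univ) := by
    have hUD : UniqueDiffOn ℝ (Ico (0:ℝ) T ×ˢ (univ : Set ℝ)) :=
      (uniqueDiffOn_Ico 0 T).prod uniqueDiffOn_univ
    have hF := (hsm.continuousOn_fderivWithin hUD (by simp)).clm_apply
      (continuousOn_const (c := ((1:ℝ), (0:ℝ))))
    refine hF.congr ?_
    rintro ⟨t, θ⟩ ⟨ht, -⟩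
    have h1 := (hsm.differentiableOn (by simp) (t, θ) ⟨ht, mem_univ _⟩).hasFDerivWithinAt
    have h2 := h1.comp_hasDerivWithinAt (s := Ico 0 T) t
      (((hasDerivAt_id t).prodMk (hasDerivAt_const t θ)).hasDerivWithinAt)
      fun s hs => (⟨hs, mem_univ _⟩ : (s, θ) ∈ Ico (0:ℝ) T ×ˢ (univ : Set ℝ))
    exact (uniqueDiffOn_Ico 0 T t ht).eq_deriv _ (hpde t ht θ) h2
  set u : ℝ → ℝ → ℝ := fun t θ => 1 / ρ t θ with hu_def
  set g : ℝ → ℝ → ℝ := fun t θ => -D t θ / ρ t θ ^ 2 with hg_def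
  have hu : ∀ s ∈ Ico 0 T, ∀ θ, HasDerivWithinAt (fun s => u s θ) (g s θ) (Ico 0 T) s :=
    fun s hs θ => by
      simpa only [hu_def, hg_def, one_div] using (hpde s hs θ).fun_inv (hpos s hs θ).ne'
  have hg : ContinuousOn (Function.uncurry g) (Ico 0 T ×ˢ univ) :=
    hDc.neg.div (hsm.continuousOn.pow 2) fun x hx => pow_ne_zero 2 (hpos x.1 hx.1 x.2).ne'
  have hrc : ∀ s ∈ Ico 0 T, Continuous (ρ s) := fun s hs => (hslice s hs).continuous
  have huc : ∀ s ∈ Ico 0 T, Continuous (u s) := fun s hs =>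
    continuous_const.div (hrc s hs) fun θ => (hpos s hs θ).ne'
  have hcl : ∀ s ∈ Ico 0 T, Closes (u s) := fun s hs => by
    have h1 := hcos s hs
    have h2 := hsin s hs
    simp only [div_eq_mul_one_div (Real.cos _), div_eq_mul_one_div (Real.sin _)] at h1 h2
    exact ⟨h1, h2⟩
  have hupos : ∀ s ∈ Ico 0 T, ∀ θ, 0 < u s θ := fun s hs θ => one_div_pos.2 (hpos s hs θ)
  have main : ∀ t ∈ Ico (0:ℝ) T, ∃ d : ℝ,
      HasDerivWithinAt (fun s => hRatio (ρ s)) d (Ico 0 T) t ∧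
      d ≤ -(12 * π ^ 2) / (perim (ρ t) * encArea (ρ t)) ∧
      -(12 * π ^ 2) / (perim (ρ t) * encArea (ρ t)) ≤ 0 := by
    intro t ht
    set r := ρ t with hr
    set h := hRatio r with hh
    have hut := huc t ht
    have hrt := hrc t ht
    have hsc := continuous_supp hut
    have hσ : 0 < perim r := intervalIntegral.intervalIntegral_pos_of_pos_on
      (hut.intervalIntegrable _ _) (fun x _ => hupos t ht x) (by positivity)
    have hl : 0 < encArea r := by
      rw [encArea_eq]
      exact mul_pos (by norm_num) (integral_supp_mul_pos hut (hcl t ht) (hupos t ht))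
    have hiso : 4 * π * encArea r ≤ perim r ^ 2 := by
      have := isoperimetric hut (hcl t ht)
      rw [le_div_iff₀ (by positivity)] at this
      rw [encArea_eq]
      simp only [perim]
      linarith
    have hd1 : ∀ θ, HasDerivAt r (deriv r θ) θ := fun θ =>
      ((hslice t ht).differentiable (by simp) θ).hasDerivAt
    have hC1 : ContDiff ℝ 1 (deriv r) :=
      contDiff_infty.1 (contDiff_infty_iff_deriv.1 (hslice t ht)).2 1
    have hd2 : ∀ θ, HasDerivAt (deriv r) (iteratedDeriv 2 r θ) θ := fun θ => by
      rw [iteratedDeriv_succ, iteratedDeriv_one]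
      exact (hC1.differentiable (by simp) θ).hasDerivAt
    have hc2 : Continuous (iteratedDeriv 2 r) :=
      (contDiff_infty.1 (hslice t ht) 2).continuous_iteratedDeriv 2 le_rfl
    have hgt (θ : ℝ) : g t θ = 2 * h - (iteratedDeriv 2 r θ + r θ) := by
      have : r θ ≠ 0 := (hpos t ht θ).ne'
      simp only [hg_def, hD, ← hr, ← hh]
      field_simp
      ring
    -- `ρ'` inherits the period, so `∫ ρ'' = 0`.
    have hint2 : (∫ θ in (0:ℝ)..(2 * π), iteratedDeriv 2 r θ) = 0 := by
      rw [intervalIntegral.integral_eq_sub_of_hasDerivAt (fun θ _ => hd2 θ)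
        (hc2.intervalIntegrable _ _), sub_eq_zero]
      have := deriv_comp_add_const r (2 * π) 0
      rw [zero_add] at this
      rw [← this]
      congr 1
      exact funext fun θ => hper t ht θ
    have hσd : HasDerivWithinAt (fun s => perim (ρ s))
        (4 * π * h - ∫ θ in (0:ℝ)..(2 * π), r θ) (Ico 0 T) t := by
      refine (hasDerivWithinAt_integral (b := 2 * π) (by positivity) ht hu hg huc).congr_deriv ?_
      simp only [hgt]
      rw [intervalIntegral.integral_sub (Continuous.intervalIntegrable (by fun_prop) _ _)
        (Continuous.intervalIntegrable (by fun_prop) _ _), intervalIntegral.integral_add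
        (Continuous.intervalIntegrable (by fun_prop) _ _)
        (Continuous.intervalIntegrable (by fun_prop) _ _), hint2, intervalIntegral.integral_const,
        smul_eq_mul]
      ring
    have hld : HasDerivWithinAt (fun s => encArea (ρ s))
        (2 * h * perim r - 2 * π) (Ico 0 T) t := by
      simp only [encArea_eq]
      refine ((hasDerivWithinAt_integral_supp_mul ht hu hg huc hcl).const_mul
        (1 / 2)).congr_deriv ?_
      simp only [hgt, mul_sub]
      rw [intervalIntegral.integral_sub (Continuous.intervalIntegrable (by fun_prop) _ _)
        (Continuous.intervalIntegrable (by fun_prop) _ _),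
        integral_supp_mul_second_deriv hut (hcl t ht) hd1 hd2 hc2,
        intervalIntegral.integral_mul_const, integral_supp hut (hcl t ht)]
      have e : (∫ θ in (0:ℝ)..(2 * π), u t θ * r θ) = 2 * π := by
        have : ∀ θ, u t θ * r θ = 1 := fun θ => one_div_mul_cancel (hpos t ht θ).ne'
        simp [this]
      rw [e]
      simp only [perim, hu_def, ← hr]
      ring
    refine ⟨_, hσd.div hld hl.ne', final_bound hσ hl hiso (four_pi_sq_le hrt (hpos t ht)), ?_⟩
    rw [neg_div]
    exact neg_nonpos.2 (by positivity)
  refine ⟨main, antitoneOn_of_deriv_nonpos (convex_Ico 0 T) (fun t ht => ?_) ?_ ?_⟩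
  · obtain ⟨d, hd, -⟩ := main t ht
    exact hd.continuousWithinAt
  · intro t ht
    obtain ⟨d, hd, -⟩ := main t (interior_subset ht)
    exact (hd.hasDerivAt (mem_interior_iff_mem_nhds.1 ht)).differentiableAt.differentiableWithinAt
  · intro t ht
    obtain ⟨d, hd, h1, h2⟩ := main t (interior_subset ht)
    rw [(hd.hasDerivAt (mem_interior_iff_mem_nhds.1 ht)).deriv]
    exact h1.trans h2
end
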